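/- arXiv:math/0107085 — 4 statements merged into one kernel-verified Lean document; each statement's English description precedes it below -/
import Mathlib

section
/- MC(n) actions on the interval: Let n ≥ 2 and suppose a₁, …, a_n, b₁, …, b_n ∈ Diff²₊(I) and c₁, …, c_{n−1} ∈ Diff²₊(I) satisfy: (1) a_i a_j = a_j a_i, b_i b_j = b_j b_i, c_i c_j = c_j c_i, and a_i c_j = c_j a_i for all valid i, j; (2) a_i b_j = b_j a_i whenever i ≠ j; (3) b_i c_j = c_j b_i whenever j ≠ i and j ≠ i−1; (4) a_i b_i a_i = b_i a_i b_i for all 1 ≤ i ≤ n, and b_i c_j b_i = c_j b_i c_j whenever j = i or j = i−1. Then the subgroup of Diff²₊(I) generated by all the a_i, b_i, c_j is abelian. -/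
/-- A permutation of `ℝ` representing an orientation-preserving C² diffeomorphism of
`I = [0,1]`: it is the identity off `[0,1]`, is C² on `[0,1]`, and has positive
(one-sided, at the endpoints) derivative on `[0,1]`. -/
def IsDiffI (f : Equiv.Perm ℝ) : Prop :=
  (∀ x, x ∉ Set.Icc (0 : ℝ) 1 → f x = x) ∧
  ContDiffOn ℝ 2 f (Set.Icc 0 1) ∧
  ∀ x ∈ Set.Icc (0 : ℝ) 1, 0 < derivWithin f (Set.Icc 0 1) x

open Filter Topology Asymptotics in
/-- Strict right derivative of `f` at `p`. -/
def RS (f : Equiv.Perm ℝ) (p l : ℝ) : Prop :=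
  (fun q : ℝ × ℝ => f q.1 - f q.2 - l * (q.1 - q.2)) =o[𝓝[≥] p ×ˢ 𝓝[≥] p]
    (fun q : ℝ × ℝ => q.1 - q.2)

/-- Increasing permutations with positive strict right derivatives. -/
def KK (f : Equiv.Perm ℝ) : Prop :=
  StrictMono f ∧ ∀ p, ∃ l, 0 < l ∧ RS f p l

section
open Filter Topology Asymptotics

lemma sm_continuous {f : Equiv.Perm ℝ} (hf : StrictMono f) : Continuous f :=
  (StrictMono.orderIsoOfSurjective f hf f.surjective).continuous

lemma sm_inv {f : Equiv.Perm ℝ} (hf : StrictMono f) : StrictMono (f⁻¹ : Equiv.Perm ℝ) := by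
  intro x y hxy
  rw [← hf.lt_iff_lt]
  simpa using hxy

lemma sm_tend {f : Equiv.Perm ℝ} (hf : StrictMono f) (p : ℝ) :
    Tendsto f (𝓝[≥] p) (𝓝[≥] (f p)) := by
  apply tendsto_nhdsWithin_of_tendsto_nhds_of_eventually_within
  · exact ((sm_continuous hf).tendsto p).mono_left nhdsWithin_le_nhds
  · filter_upwards [self_mem_nhdsWithin] with y hy
    exact hf.monotone hy

lemma RS.mul {f g : Equiv.Perm ℝ} {p l m : ℝ} (hg : StrictMono g)
    (h1 : RS f (g p) l) (h2 : RS g p m) : RS (f * g) p (l * m) := by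
  unfold RS at *
  have ht := (sm_tend hg p).prodMap (sm_tend hg p)
  have h3 := h1.comp_tendsto ht
  have h4 : (fun q : ℝ × ℝ => g q.1 - g q.2) =O[𝓝[≥] p ×ˢ 𝓝[≥] p]
      (fun q : ℝ × ℝ => q.1 - q.2) := by
    have := h2.isBigO.add ((isBigO_refl (fun q : ℝ × ℝ => q.1 - q.2)
      (𝓝[≥] p ×ˢ 𝓝[≥] p)).const_mul_left m)
    simpa using this
  have h5 := (h3.trans_isBigO h4).add (h2.const_mul_left l)
  refine h5.congr_left ?_
  intro q
  simp [Equiv.Perm.mul_apply]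
  ring

lemma RS.inv {f : Equiv.Perm ℝ} {p l : ℝ} (hf : StrictMono f) (hl : 0 < l)
    (h : RS f p l) : RS f⁻¹ (f p) l⁻¹ := by
  unfold RS at *
  have ht := (sm_tend (sm_inv hf) (f p)).prodMap (sm_tend (sm_inv hf) (f p))
  rw [show (f⁻¹ : Equiv.Perm ℝ) (f p) = p from f.symm_apply_apply p] at ht
  have h1 : (fun q : ℝ × ℝ => q.1 - q.2) =O[𝓝[≥] p ×ˢ 𝓝[≥] p]
      (fun q : ℝ × ℝ => f q.1 - f q.2) := by
    have h2 := (h.const_mul_right (ne_of_gt hl)).right_isBigO_add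
    have h3 : (fun q : ℝ × ℝ => l * (q.1 - q.2)) =O[𝓝[≥] p ×ˢ 𝓝[≥] p]
      (fun q : ℝ × ℝ => f q.1 - f q.2) := by
      refine h2.congr_right ?_
      intro q
      simp
    have h4 := h3.const_mul_left l⁻¹
    refine h4.congr_left ?_
    intro q
    field_simp
  have h2 := ((h.trans_isBigO h1).const_mul_left (-l⁻¹)).comp_tendsto ht
  refine h2.congr ?_ ?_
  · intro q
    simp
    field_simp
    ring
  · intro q
    simp

lemma KK.mul {f g : Equiv.Perm ℝ} (hf : KK f) (hg : KK g) : KK (f * g) := by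
  refine ⟨hf.1.comp hg.1, fun p => ?_⟩
  obtain ⟨l, hl, h1⟩ := hf.2 (g p)
  obtain ⟨m, hm, h2⟩ := hg.2 p
  exact ⟨l * m, mul_pos hl hm, h1.mul hg.1 h2⟩

lemma KK.inv {f : Equiv.Perm ℝ} (hf : KK f) : KK f⁻¹ := by
  refine ⟨sm_inv hf.1, fun p => ?_⟩
  obtain ⟨l, hl, h1⟩ := hf.2 (f⁻¹ p)
  have := h1.inv hf.1 hl
  rw [show f ((f⁻¹ : Equiv.Perm ℝ) p) = p from f.apply_symm_apply p] at this
  exact ⟨l⁻¹, inv_pos.2 hl, this⟩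

lemma RS_comm {g t : Equiv.Perm ℝ} (hg : KK g) (ht : KK t) {p : ℝ} (hgp : g p = p)
    (htp : t p = p) : RS (g * t * g⁻¹ * t⁻¹) p 1 := by
  obtain ⟨l, hl, h1⟩ := hg.2 p
  obtain ⟨m, hm, h2⟩ := ht.2 p
  have h3 := h1.inv hg.1 hl
  have h4 := h2.inv ht.1 hm
  rw [hgp] at h3
  rw [htp] at h4
  have hgi : g⁻¹ p = p := by rw [Equiv.Perm.inv_eq_iff_eq, hgp]
  have hti : t⁻¹ p = p := by rw [Equiv.Perm.inv_eq_iff_eq, htp]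
  have h5 : RS (g * t) p (l * m) := RS.mul ht.1 (by rwa [htp]) h2
  have h6 : RS (g * t * g⁻¹) p (l * m * l⁻¹) := RS.mul (sm_inv hg.1) (by rwa [hgi]) h3
  have h7 : RS (g * t * g⁻¹ * t⁻¹) p (l * m * l⁻¹ * m⁻¹) :=
    RS.mul (sm_inv ht.1) (by rwa [hti]) h4
  have : l * m * l⁻¹ * m⁻¹ = 1 := by field_simp
  rwa [this] at h7

/-- Displacements add up to first order. -/
lemma disp_add {h k : Equiv.Perm ℝ} {p : ℝ} (hk : StrictMono k) (hkp : k p = p)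
    (h1 : RS h p 1) {M : ℝ → ℝ} (hM : (fun y => k y - y) =O[𝓝[>] p] M) :
    (fun y => (h * k) y - y - (h y - y) - (k y - y)) =o[𝓝[>] p] M := by
  unfold RS at h1
  have ht := sm_tend hk p
  rw [hkp] at ht
  have ht1 : Tendsto (fun y => (k y, y)) (𝓝[>] p) (𝓝[≥] p ×ˢ 𝓝[≥] p) :=
    (ht.mono_left (nhdsWithin_mono _ Set.Ioi_subset_Ici_self)).prodMk
      (tendsto_id.mono_left (nhdsWithin_mono _ Set.Ioi_subset_Ici_self))
  have h2 := (h1.comp_tendsto ht1).trans_isBigO hM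
  refine h2.congr_left ?_
  intro y
  simp [Equiv.Perm.mul_apply]

lemma grp_rel {G : Type*} [Group G] {x y z : G} (hxy : x * y * x = y * x * y)
    (hx : z * x = x * z) (hy : z * y = y * z) :
    (y * x⁻¹) * (x * z⁻¹) * ((x * z⁻¹) * (y * z⁻¹)) =
      ((x * z⁻¹) * (y * z⁻¹)) * (x * z⁻¹) := by
  have cx : Commute z⁻¹ x := Commute.inv_left hx
  have cy : Commute z⁻¹ y := Commute.inv_left hy
  have e1 : z⁻¹ * x = x * z⁻¹ := cx
  have e2 : z⁻¹ * y = y * z⁻¹ := cy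
  have e3 : ∀ w, z⁻¹ * (x * w) = x * (z⁻¹ * w) := fun w => by
    rw [← mul_assoc, e1, mul_assoc]
  have e4 : ∀ w, z⁻¹ * (y * w) = y * (z⁻¹ * w) := fun w => by
    rw [← mul_assoc, e2, mul_assoc]
  have e5 : ∀ w, x * (y * (x * w)) = y * (x * (y * w)) := fun w => by
    simp only [← mul_assoc, hxy]
  simp only [mul_assoc, e3, e4, inv_mul_cancel_left, e5]

lemma grp_relB {G : Type*} [Group G] {x y z : G} (hxy : x * y * x = y * x * y)
    (hx : z * x = x * z) (hy : z * y = y * z) :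
    y * x⁻¹ = ((x * z⁻¹) * (y * z⁻¹)) * (x * z⁻¹) * ((x * z⁻¹) * (y * z⁻¹))⁻¹ * (x * z⁻¹)⁻¹ := by
  rw [← grp_rel hxy hx hy]
  group

end

section
open Filter Topology Asymptotics

/-- Key theorem (Thurston stability argument) for a family with connected braid graph. -/
lemma key {s : Fin 5 → Equiv.Perm ℝ} (hK : ∀ i, KK (s i)) (hfix : ∀ i x, x < 0 → s i x = x)
    (E : Fin 5 → Fin 5 → Prop)
    (hE : ∀ i j, E i j → ∃ k, s j * s i * s j = s i * s j * s i ∧ s k * s i = s i * s k ∧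
      s k * s j = s j * s k)
    (hconn : ∀ R : Fin 5 → Fin 5 → Prop, (∀ i j, E i j → R i j) →
      (∀ i j k, R i j → R j k → R i k) → ∀ i j, R i j) :
    ∀ i j, s i = s j := by
  classical
  set d : Fin 5 → Fin 5 → Equiv.Perm ℝ := fun i j => s i * (s j)⁻¹ with hd
  have hdK : ∀ i j, KK (d i j) := fun i j => (hK i).mul (hK j).inv
  have hdd : ∀ i j k, d i k = d i j * d j k := by
    intro i j k
    simp [hd]
  suffices H : ∀ x : ℝ, ∀ i j, d i j x = x by
    intro i j
    have : d i j = 1 := Equiv.ext fun x => H x i j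
    exact mul_inv_eq_one.1 this
  by_contra hcon
  push Not at hcon
  obtain ⟨x, i0, j0, hx⟩ := hcon
  set Z : Set ℝ := {y | ∀ i j, d i j y = y} with hZ
  have hZc : IsClosed Z := by
    have : Z = ⋂ i, ⋂ j, {y | d i j y = y} := by
      ext y
      simp [hZ]
    rw [this]
    exact isClosed_iInter fun i => isClosed_iInter fun j =>
      isClosed_eq (sm_continuous (hdK i j).1) continuous_id
  set W := Z ∩ Set.Iic x with hW
  have hWc : IsClosed W := hZc.inter isClosed_Iic
  have hWne : W.Nonempty := by
    refine ⟨min x 0 - 1, ?_, ?_⟩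
    · intro i j
      have h0 : min x 0 - 1 < 0 := by linarith [min_le_right x 0]
      have : (s j)⁻¹ (min x 0 - 1) = min x 0 - 1 := by
        rw [Equiv.Perm.inv_eq_iff_eq, hfix j _ h0]
      simp only [hd, Equiv.Perm.mul_apply, this, hfix i _ h0]
    · have := min_le_left x 0
      simp only [Set.mem_Iic]
      linarith
  have hWb : BddAbove W := ⟨x, fun y hy => hy.2⟩
  set p := sSup W with hp
  have hpW : p ∈ W := hWc.csSup_mem hWne hWb
  have hpZ : ∀ i j, d i j p = p := hpW.1
  have hpx : p < x := by
    refine lt_of_le_of_ne hpW.2 ?_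
    intro h
    exact hx (h ▸ hpZ i0 j0)
  -- derivatives are one
  have hone : ∀ i j, RS (d i j) p 1 := by
    apply hconn
    · intro i j hij
      obtain ⟨k, h1, h2, h3⟩ := hE i j hij
      have := grp_relB h1 h3 h2
      have e : d i j = (d j k * d i k) * d j k * (d j k * d i k)⁻¹ * (d j k)⁻¹ := this
      rw [e]
      apply RS_comm ((hdK _ _).mul (hdK _ _)) (hdK _ _)
      · rw [Equiv.Perm.mul_apply, hpZ, hpZ]
      · exact hpZ _ _
    · intro i j k h1 h2
      rw [hdd i j k]
      have := RS.mul (f := d i j) (hdK j k).1 (by rwa [hpZ]) h2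
      rwa [one_mul] at this
  set M : ℝ → ℝ := fun y => ∑ i, ∑ j, |d i j y - y| with hM
  have hle : ∀ i j y, |d i j y - y| ≤ M y := by
    intro i j y
    refine le_trans ?_ (Finset.single_le_sum (f := fun i => ∑ j, |d i j y - y|)
      (fun i _ => Finset.sum_nonneg fun j _ => abs_nonneg _) (Finset.mem_univ i))
    exact Finset.single_le_sum (f := fun j => |d i j y - y|)
      (fun j _ => abs_nonneg _) (Finset.mem_univ j)
  have hO : ∀ i j, (fun y => d i j y - y) =O[𝓝[>] p] M := by
    intro i j
    apply IsBigO.of_bound 1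
    filter_upwards with y
    rw [one_mul, Real.norm_eq_abs, Real.norm_eq_abs]
    exact (hle i j y).trans (le_abs_self _)
  have ho : ∀ i j, (fun y => d i j y - y) =o[𝓝[>] p] M := by
    apply hconn
    · intro i j hij
      obtain ⟨k, h1, h2, h3⟩ := hE i j hij
      have e : d i j * d j k * (d j k * d i k) = (d j k * d i k) * d j k := grp_rel h1 h3 h2
      have pg : (d j k * d i k) p = p := by rw [Equiv.Perm.mul_apply, hpZ, hpZ]
      have kg := (hdK j k).mul (hdK i k)
      have rg : RS (d j k * d i k) p 1 := by
        have := RS.mul (f := d j k) (hdK i k).1 (by rw [hpZ]; exact hone _ _) (hone i k)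
        rwa [one_mul] at this
      have rl : RS (d i j * d j k) p 1 := by
        have := RS.mul (f := d i j) (hdK j k).1 (by rw [hpZ]; exact hone _ _) (hone j k)
        rwa [one_mul] at this
      have a1 := disp_add (hdK i k).1 (hpZ i k) (hone j k) (hO i k)
      have og : (fun y => (d j k * d i k) y - y) =O[𝓝[>] p] M := by
        refine ((a1.isBigO.add (hO j k)).add (hO i k)).congr_left ?_
        intro y
        ring
      have a2 := disp_add (hdK j k).1 (hpZ j k) (hone i j) (hO j k)
      have a3 := disp_add kg.1 pg rl og
      have a4 := disp_add (hdK j k).1 (hpZ j k) rg (hO j k)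
      rw [e] at a3
      refine ((a4.sub a3).sub a2).congr_left ?_
      intro y
      ring
    · intro i j k h1 h2
      have a1 := disp_add (hdK j k).1 (hpZ j k) (hone i j) (hO j k)
      rw [← hdd] at a1
      refine ((a1.add h1).add h2).congr_left ?_
      intro y
      ring
  have hMo : M =o[𝓝[>] p] M := by
    rw [hM]
    apply IsLittleO.fun_sum
    intro i _
    apply IsLittleO.fun_sum
    intro j _
    exact (ho i j).abs_left
  have h0 : ∀ᶠ y in 𝓝[>] p, M y = 0 := by
    have := hMo.bound (show (0:ℝ) < 1/2 by norm_num)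
    filter_upwards [this] with y hy
    have := norm_nonneg (M y)
    exact norm_eq_zero.1 (by linarith)
  have h1 : ∀ᶠ y in 𝓝[>] p, y ∈ Set.Ioo p x := Ioo_mem_nhdsGT hpx
  obtain ⟨y, hy0, hy1⟩ := (h0.and h1).exists
  have hyW : y ∈ W := by
    refine ⟨fun i j => ?_, hy1.2.le⟩
    have := hle i j y
    rw [hy0] at this
    have := abs_nonpos_iff.1 this
    linarith
  exact absurd (le_csSup hWb hyW) (not_le.2 hy1.1)

lemma rs_of_right_id {f : Equiv.Perm ℝ} {p : ℝ} (h : ∀ᶠ y in 𝓝[≥] p, f y = y) : RS f p 1 := by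
  unfold RS
  have h2 := h.prod_mk h
  refine (isLittleO_zero (fun q : ℝ × ℝ => q.1 - q.2) (𝓝[≥] p ×ˢ 𝓝[≥] p)).congr' ?_ (EventuallyEq.refl _ _)
  filter_upwards [h2] with q hq
  rw [hq.1, hq.2]
  ring

lemma isDiffI_maps {f : Equiv.Perm ℝ} (hf : IsDiffI f) {x : ℝ} (hx : x ∈ Set.Icc (0:ℝ) 1) :
    f x ∈ Set.Icc (0:ℝ) 1 := by
  by_contra h
  have := f.injective (hf.1 _ h)
  exact h (this.symm ▸ hx)

lemma isDiffI_sm {f : Equiv.Perm ℝ} (hf : IsDiffI f) : StrictMono f := by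
  have hs : StrictMonoOn f (Set.Icc (0:ℝ) 1) := by
    refine strictMonoOn_of_deriv_pos (convex_Icc 0 1) hf.2.1.continuousOn ?_
    intro x hx
    rw [← derivWithin_of_mem_nhds (mem_interior_iff_mem_nhds.1 hx)]
    exact hf.2.2 x (interior_subset hx)
  intro x y hxy
  by_cases hx : x ∈ Set.Icc (0:ℝ) 1 <;> by_cases hy : y ∈ Set.Icc (0:ℝ) 1
  · exact hs hx hy hxy
  · have h1 := isDiffI_maps hf hx
    rw [hf.1 y hy]
    by_contra h
    exact hy ⟨hx.1.trans hxy.le, (not_lt.1 h).trans h1.2⟩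
  · have h1 := isDiffI_maps hf hy
    rw [hf.1 x hx]
    by_contra h
    exact hx ⟨h1.1.trans (not_lt.1 h), hxy.le.trans hy.2⟩
  · rw [hf.1 x hx, hf.1 y hy]
    exact hxy

lemma isDiffI_one {f : Equiv.Perm ℝ} (hf : IsDiffI f) : f 1 = 1 := by
  have h1 := isDiffI_maps hf (x := 1) (by simp)
  obtain ⟨z, hz⟩ := f.surjective 1
  have hz1 : z ≤ 1 := by
    by_contra h
    have : f z = z := hf.1 z (fun hh => h hh.2)
    exact h (by rw [← this, hz])
  have := (isDiffI_sm hf).monotone hz1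
  exact le_antisymm h1.2 (hz ▸ this)

lemma isDiffI_KK {f : Equiv.Perm ℝ} (hf : IsDiffI f) : KK f := by
  refine ⟨isDiffI_sm hf, fun p => ?_⟩
  by_cases hp0 : p < 0
  · refine ⟨1, one_pos, rs_of_right_id ?_⟩
    filter_upwards [mem_nhdsWithin_of_mem_nhds (Iio_mem_nhds hp0)] with y hy
    exact hf.1 y (fun h => absurd h.1 (not_le.2 hy))
  by_cases hp1 : 1 ≤ p
  · refine ⟨1, one_pos, rs_of_right_id ?_⟩
    filter_upwards [self_mem_nhdsWithin] with y hy
    rcases (hp1.trans hy).eq_or_lt with h | h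
    · rw [← h]
      exact isDiffI_one hf
    · exact hf.1 y (fun hh => absurd hh.2 (not_le.2 h))
  push Not at hp0 hp1
  have hpI : p ∈ Set.Icc (0:ℝ) 1 := ⟨hp0, hp1.le⟩
  set l := derivWithin f (Set.Icc 0 1) p with hl
  refine ⟨l, hf.2.2 p hpI, ?_⟩
  have hcd : ContinuousOn (derivWithin f (Set.Icc 0 1)) (Set.Icc 0 1) :=
    hf.2.1.continuousOn_derivWithin (uniqueDiffOn_Icc one_pos) (by norm_num)
  have hdiff : DifferentiableOn ℝ f (Set.Icc 0 1) := hf.2.1.differentiableOn (by norm_num)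
  unfold RS
  rw [isLittleO_iff]
  intro ε hε
  obtain ⟨δ, hδ, hδ2⟩ := Metric.continuousWithinAt_iff.1 (hcd p hpI) ε hε
  set r := min (p + δ) 1 with hr
  have hpr : p < r := lt_min (by linarith) hp1
  have hsub : Set.Ico p r ⊆ Set.Icc 0 1 := fun y hy =>
    ⟨hp0.trans hy.1, hy.2.le.trans (min_le_right _ _)⟩
  have hmem : Set.Ico p r ∈ 𝓝[≥] p := Ico_mem_nhdsGE hpr
  filter_upwards [prod_mem_prod hmem hmem] with q hq
  have := (convex_Ico p r).norm_image_sub_le_of_norm_hasDerivWithin_le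
    (f := fun y => f y - l * y) (f' := fun y => derivWithin f (Set.Icc 0 1) y - l) (C := ε)
    (x := q.2) (y := q.1) ?_ ?_ hq.2 hq.1
  · have e : f q.1 - f q.2 - l * (q.1 - q.2) = f q.1 - l * q.1 - (f q.2 - l * q.2) := by ring
    rw [e]
    exact this
  · intro y hy
    have h1 := (hdiff y (hsub hy)).hasDerivWithinAt.mono hsub
    have h2 := ((hasDerivWithinAt_id y (Set.Ico p r)).const_mul l)
    have := h1.fun_sub h2
    simpa using this
  · intro y hy
    have := hδ2 (hsub hy) (by
      rw [Real.dist_eq, abs_of_nonneg (by linarith [hy.1])]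
      have := hy.2.trans_le (min_le_left _ _)
      linarith)
    rw [Real.dist_eq] at this
    exact this.le

/-- Five diffeomorphisms forming a braid path are equal. -/
lemma five {x1 x2 x3 x4 x5 : Equiv.Perm ℝ} (h1 : IsDiffI x1) (h2 : IsDiffI x2)
    (h3 : IsDiffI x3) (h4 : IsDiffI x4) (h5 : IsDiffI x5)
    (b12 : x1 * x2 * x1 = x2 * x1 * x2) (b23 : x2 * x3 * x2 = x3 * x2 * x3)
    (b34 : x3 * x4 * x3 = x4 * x3 * x4) (b45 : x4 * x5 * x4 = x5 * x4 * x5)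
    (c14 : x1 * x4 = x4 * x1) (c24 : x2 * x4 = x4 * x2)
    (c25 : x2 * x5 = x5 * x2) (c35 : x3 * x5 = x5 * x3) (c13 : x1 * x3 = x3 * x1)
    (c15 : x1 * x5 = x5 * x1) :
    x1 = x2 ∧ x2 = x3 ∧ x3 = x4 ∧ x4 = x5 := by
  have hD : ∀ i, IsDiffI ((![x1, x2, x3, x4, x5] : Fin 5 → Equiv.Perm ℝ) i) := by
    intro i
    fin_cases i <;> assumption
  have := key (s := ![x1, x2, x3, x4, x5]) (fun i => isDiffI_KK (hD i))
    (fun i x hx => (hD i).1 x (fun h => absurd h.1 (not_le.2 hx)))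
    (fun i j => i.val + 1 = j.val ∨ j.val + 1 = i.val) ?_ ?_
  · exact ⟨this 0 1, this 1 2, this 2 3, this 3 4⟩
  · have A : ∀ k : Fin 5, ∀ x y z : Equiv.Perm ℝ, x * y * x = y * x * y → z * x = x * z →
        z * y = y * z → (y * x * y = x * y * x ∧ z * x = x * z ∧ z * y = y * z) ∧
          (x * y * x = y * x * y ∧ z * y = y * z ∧ z * x = x * z) :=
      fun _ x y z h u v => ⟨⟨h.symm, u, v⟩, ⟨h, v, u⟩⟩
    have e1 := A 0 x1 x2 x4 b12 c14.symm c24.symm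
    have e2 := A 0 x2 x3 x5 b23 c25.symm c35.symm
    have e3 := A 0 x3 x4 x1 b34 c13 c14
    have e4 := A 0 x4 x5 x1 b45 c14 c15
    intro i j hij
    fin_cases i <;> fin_cases j <;> simp at hij
    · exact ⟨3, e1.1⟩
    · exact ⟨3, e1.2⟩
    · exact ⟨4, e2.1⟩
    · exact ⟨4, e2.2⟩
    · exact ⟨0, e3.1⟩
    · exact ⟨0, e3.2⟩
    · exact ⟨0, e4.1⟩
    · exact ⟨0, e4.2⟩
  · intro R hR ht
    have r01 := hR 0 1 (by simp)
    have r12 := hR 1 2 (by simp)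
    have r23 := hR 2 3 (by simp)
    have r34 := hR 3 4 (by simp)
    have r10 := hR 1 0 (by simp)
    have r21 := hR 2 1 (by simp)
    have r32 := hR 3 2 (by simp)
    have r43 := hR 4 3 (by simp)
    have t0 : ∀ i, R i 0 := by
      have a1 := ht _ _ _ r21 r10
      have a2 := ht _ _ _ r32 a1
      have a3 := ht _ _ _ r43 a2
      intro i
      fin_cases i
      · exact ht _ _ _ r01 r10
      · exact r10
      · exact a1
      · exact a2
      · exact a3
    have f0 : ∀ i, R 0 i := by
      have a1 := ht _ _ _ r01 r12
      have a2 := ht _ _ _ a1 r23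
      have a3 := ht _ _ _ a2 r34
      intro i
      fin_cases i
      · exact ht _ _ _ r01 r10
      · exact r01
      · exact a1
      · exact a2
      · exact a3
    exact fun i j => ht _ _ _ (t0 i) (f0 j)

end

/-- **MC(n) actions on the interval.** Let `n ≥ 2` and let
`a 1, …, a n, b 1, …, b n, c 1, …, c (n-1)` be orientation-preserving C²
diffeomorphisms of `I = [0,1]` satisfying the `MC(n)` relations:
(1) the `a`'s commute with each other, the `b`'s with each other, the `c`'s with each
other, and the `a`'s with the `c`'s; (2) `a i` commutes with `b j` for `i ≠ j`;
(3) `b i` commutes with `c j` for `j ≠ i, i − 1`; (4) `a i * b i * a i = b i * a i * b i`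
and `b i * c j * b i = c j * b i * c j` for `j = i, i − 1`.
Then the group generated by all of them is abelian. -/
theorem mcn_actions_on_interval (n : ℕ) (hn : 2 ≤ n)
    (a b c : ℕ → Equiv.Perm ℝ)
    (ha : ∀ i, 1 ≤ i → i ≤ n → IsDiffI (a i))
    (hb : ∀ i, 1 ≤ i → i ≤ n → IsDiffI (b i))
    (hc : ∀ j, 1 ≤ j → j ≤ n - 1 → IsDiffI (c j))
    (haa : ∀ i j, 1 ≤ i → i ≤ n → 1 ≤ j → j ≤ n → a i * a j = a j * a i)
    (hbb : ∀ i j, 1 ≤ i → i ≤ n → 1 ≤ j → j ≤ n → b i * b j = b j * b i)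
    (hcc : ∀ i j, 1 ≤ i → i ≤ n - 1 → 1 ≤ j → j ≤ n - 1 → c i * c j = c j * c i)
    (hac : ∀ i j, 1 ≤ i → i ≤ n → 1 ≤ j → j ≤ n - 1 → a i * c j = c j * a i)
    (hab : ∀ i j, 1 ≤ i → i ≤ n → 1 ≤ j → j ≤ n → i ≠ j → a i * b j = b j * a i)
    (hbc : ∀ i j, 1 ≤ i → i ≤ n → 1 ≤ j → j ≤ n - 1 → j ≠ i → j ≠ i - 1 →
      b i * c j = c j * b i)
    (haba : ∀ i, 1 ≤ i → i ≤ n → a i * b i * a i = b i * a i * b i)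
    (hbcb : ∀ i j, 1 ≤ i → i ≤ n → 1 ≤ j → j ≤ n - 1 → (j = i ∨ j = i - 1) →
      b i * c j * b i = c j * b i * c j) :
    ∀ u ∈ Subgroup.closure
        ({x | ∃ i, 1 ≤ i ∧ i ≤ n ∧ (x = a i ∨ x = b i)} ∪
         {x | ∃ j, 1 ≤ j ∧ j ≤ n - 1 ∧ x = c j}),
      ∀ v ∈ Subgroup.closure
        ({x | ∃ i, 1 ≤ i ∧ i ≤ n ∧ (x = a i ∨ x = b i)} ∪
         {x | ∃ j, 1 ≤ j ∧ j ≤ n - 1 ∧ x = c j}),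
      Commute u v := by
  have step : ∀ i, 1 ≤ i → i + 1 ≤ n →
      a i = b i ∧ b i = c i ∧ c i = b (i + 1) ∧ b (i + 1) = a (i + 1) := by
    intro i h1 h2
    have hc' : i ≤ n - 1 := by omega
    have hi : i ≤ n := by omega
    have hj : 1 ≤ i + 1 := by omega
    exact five (ha i h1 hi) (hb i h1 hi) (hc i h1 hc') (hb (i + 1) hj h2) (ha (i + 1) hj h2)
      (haba i h1 hi) (hbcb i i h1 hi h1 hc' (Or.inl rfl))
      (hbcb (i + 1) i hj h2 h1 hc' (Or.inr (by omega))).symm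
      (haba (i + 1) hj h2).symm
      (hab i (i + 1) h1 hi hj h2 (by omega)) (hbb i (i + 1) h1 hi hj h2)
      (hab (i + 1) i hj h2 h1 hi (by omega)).symm (hac (i + 1) i hj h2 h1 hc').symm
      (hac i i h1 hi h1 hc') (haa i (i + 1) h1 hi hj h2)
  have hab1 : ∀ i, 1 ≤ i → i ≤ n → a i = a 1 ∧ b i = a 1 := by
    intro i h1
    induction i, h1 using Nat.le_induction with
    | base =>
      intro _
      exact ⟨rfl, (step 1 le_rfl (by omega)).1.symm⟩
    | succ i h1 ih =>
      intro h2
      obtain ⟨e1, e2, e3, e4⟩ := step i h1 h2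
      obtain ⟨f1, f2⟩ := ih (by omega)
      have : b (i + 1) = a 1 := by rw [← e3, ← e2, f2]
      exact ⟨by rw [← e4, this], this⟩
  have hc1 : ∀ j, 1 ≤ j → j ≤ n - 1 → c j = a 1 := by
    intro j h1 h2
    rw [← (step j h1 (by omega)).2.1]
    exact (hab1 j h1 (by omega)).2
  have hsub : Subgroup.closure
        ({x | ∃ i, 1 ≤ i ∧ i ≤ n ∧ (x = a i ∨ x = b i)} ∪
         {x | ∃ j, 1 ≤ j ∧ j ≤ n - 1 ∧ x = c j}) ≤ Subgroup.zpowers (a 1) := by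
    rw [Subgroup.closure_le]
    rintro x (⟨i, h1, h2, h | h⟩ | ⟨j, h1, h2, h⟩)
    · rw [h, (hab1 i h1 h2).1]
      exact Subgroup.mem_zpowers _
    · rw [h, (hab1 i h1 h2).2]
      exact Subgroup.mem_zpowers _
    · rw [h, hc1 j h1 h2]
      exact Subgroup.mem_zpowers _
  intro u hu v hv
  obtain ⟨k, rfl⟩ := Subgroup.mem_zpowers_iff.1 (hsub hu)
  obtain ⟨m, rfl⟩ := Subgroup.mem_zpowers_iff.1 (hsub hv)
  exact Commute.zpow_zpow_self _ _ _
end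

section
/- For n ≥ 6, any group homomorphism from Aut(F_n), the automorphism group of the free group on n generators, to Diff²₊(I) is trivial: every automorphism of F_n is sent to the identity diffeomorphism of [0,1]. -/
namespace NielsenAux
open FreeGroup

section words
variable {α : Type*} [DecidableEq α]

/-- Length of the longest common prefix. -/
def cp {β : Type*} [DecidableEq β] : List β → List β → ℕ
  | [], _ => 0
  | _ :: _, [] => 0
  | a :: l, b :: m => if a = b then cp l m + 1 else 0

theorem le_cp_iff {β : Type*} [DecidableEq β] (l m : List β) (k : ℕ) :
    k ≤ cp l m ↔ k ≤ l.length ∧ k ≤ m.length ∧ l.take k = m.take k := by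
  induction l generalizing m k with
  | nil => 
    simp only [cp]
    constructor
    · intro h
      obtain rfl : k = 0 := by omega
      simp
    · intro h; simpa using h.1
  | cons a l ih =>
    cases m with
    | nil =>
      simp only [cp]
      constructor
      · intro h
        obtain rfl : k = 0 := by omega
        simp
      · intro h; simpa using h.2.1
    | cons b m =>
      simp only [cp]
      cases k with
      | zero => simp
      | succ k =>
        split_ifs with h
        · simp [ih, h]
        · simp [h]

theorem length_reduce_invRev_append (L M : List (α × Bool)) (hL : IsReduced L)
    (hM : IsReduced M) :
    (reduce (invRev L ++ M)).length + 2 * cp L M = L.length + M.length := by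
  induction L generalizing M with
  | nil => simp [cp, hM.reduce_eq]
  | cons a l ih =>
    cases M with
    | nil => simp [cp, reduce_invRev, hL.reduce_eq]
    | cons b m =>
      simp only [cp]
      split_ifs with h
      · subst h
        have h1 := ih m (hL.infix ⟨[a], [], by simp⟩) (hM.infix ⟨[a], [], by simp⟩)
        have h2 : reduce (invRev (a :: l) ++ a :: m) = reduce (invRev l ++ m) := by
          apply reduce.sound
          rw [← mul_mk, ← inv_mk, ← mul_mk, ← inv_mk]
          rw [show (a :: l) = [a] ++ l from rfl, show (a :: m) = [a] ++ m from rfl,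
            ← mul_mk, ← mul_mk]
          group
        rw [h2]
        simp only [List.length_cons]
        omega
      · have hr : IsReduced (invRev (a :: l) ++ b :: m) := by
          have hL' : IsReduced (invRev (a :: l)) := by
            rw [isReduced_iff_reduce_eq, reduce_invRev, hL.reduce_eq]
          rw [invRev_cons] at hL' ⊢
          have := IsReduced.append_overlap hL' (L₃ := b :: m) (L₂ := invRev [a])
            (by
              simp only [invRev, List.map_cons, List.map_nil, List.reverse_cons, List.reverse_nil, List.nil_append, List.singleton_append, isReduced_cons_cons]
              refine ⟨fun h1 => ?_, hM⟩
              by_contra h2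
              exact h (Prod.ext h1 (by revert h2; cases a.2 <;> cases b.2 <;> simp))) (by simp [invRev])
          simpa using this
        rw [hr.reduce_eq]
        simp

/-- Gromov product. -/
def gp (g h : FreeGroup α) : ℕ := cp g.toWord h.toWord

theorem gp_spec (g h : FreeGroup α) : (g⁻¹ * h).norm + 2 * gp g h = g.norm + h.norm := by
  have := length_reduce_invRev_append g.toWord h.toWord isReduced_toWord isReduced_toWord
  rw [FreeGroup.norm, toWord_mul, toWord_inv]
  exact this

theorem norm_inv_mul (g h : FreeGroup α) : (g⁻¹ * h).norm = (h⁻¹ * g).norm := by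
  rw [← norm_inv_eq]; simp

theorem gp_comm (g h : FreeGroup α) : gp g h = gp h g := by
  have h1 := gp_spec g h
  have h2 := gp_spec h g
  have := norm_inv_mul g h
  omega

theorem gp_le_left (g h : FreeGroup α) : gp g h ≤ g.norm :=
  ((le_cp_iff _ _ _).1 le_rfl).1

theorem gp_self (g : FreeGroup α) : gp g g = g.norm := by
  have h1 := gp_spec g g
  simp at h1; omega

theorem gp_ultra (g h k : FreeGroup α) : min (gp g h) (gp h k) ≤ gp g k := by
  have h1 := (le_cp_iff g.toWord h.toWord _).1 (min_le_left (gp g h) (gp h k))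
  have h2 := (le_cp_iff h.toWord k.toWord _).1 (min_le_right (gp g h) (gp h k))
  exact (le_cp_iff _ _ _).2 ⟨h1.1, h2.2.1, h1.2.2.trans h2.2.2⟩

theorem gp_inv_self (g : FreeGroup α) (hg : g ≠ 1) : 2 * gp g⁻¹ g < g.norm := by
  have h1 := gp_spec g⁻¹ g
  have h2 := reduceCyclically.reduce_flatten_replicate_succ (L := g.toWord) isReduced_toWord 1
  have h3 := reduceCyclically.conj_conjugator_reduceCyclically g.toWord
  have h4 : (g⁻¹⁻¹ * g).norm = (reduce (List.replicate 2 g.toWord).flatten).length := by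
    rw [inv_inv, ← pow_two, FreeGroup.norm, toWord_pow]
  have h5 : reduceCyclically g.toWord ≠ [] := by
    intro h
    rw [h, List.append_nil] at h3
    apply hg
    rw [← mk_toWord (x := g), ← h3, ← mul_mk, ← inv_mk, mul_inv_cancel]
  have h6 := List.length_pos_of_ne_nil h5
  have h7 := congrArg List.length h3
  rw [h4, h2] at h1
  simp only [List.length_append, invRev_length, List.length_flatten, List.map_replicate, List.sum_replicate, smul_eq_mul, norm_inv_eq] at h1 h7
  change _ = g.norm at h7
  omega

end words

section code
variable {n : ℕ}

/-- digit of a letter -/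
def dig (x : Fin n × Bool) : ℕ := 2 * x.1 + x.2.toNat

theorem dig_lt (x : Fin n × Bool) : dig x < 2 * n + 2 := by
  have := x.1.2
  have := Bool.toNat_le x.2
  unfold dig; omega

theorem dig_inj : Function.Injective (dig (n := n)) := by
  rintro ⟨⟨i, hi⟩, b⟩ ⟨⟨j, hj⟩, c⟩ h
  cases b <;> cases c <;> simp [dig] at h ⊢ <;> omega

/-- numerical value of a word -/
def code : List (Fin n × Bool) → ℕ
  | [] => 0
  | x :: l => dig x * (2 * n + 2) ^ l.length + code l

theorem code_lt (l : List (Fin n × Bool)) : code l < (2 * n + 2) ^ l.length := by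
  induction l with
  | nil => simp [code]
  | cons x l ih =>
    have := dig_lt x
    simp only [code, List.length_cons, pow_succ]
    nlinarith

theorem code_append (l m : List (Fin n × Bool)) :
    code (l ++ m) = code l * (2 * n + 2) ^ m.length + code m := by
  induction l with
  | nil => simp [code]
  | cons x l ih =>
    simp only [List.cons_append, code, ih, List.length_append, pow_add]
    ring

theorem code_inj (l m : List (Fin n × Bool)) (h : l.length = m.length) (hc : code l = code m) :
    l = m := by
  induction l generalizing m with
  | nil => simp at h; exact (List.eq_nil_of_length_eq_zero h.symm).symm
  | cons x l ih =>
    cases m with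
    | nil => simp at h
    | cons y m =>
      simp only [List.length_cons, add_left_inj] at h
      simp only [code, h] at hc
      have h1 := code_lt l
      have h2 := code_lt m
      rw [h] at h1
      have h3 : dig x = dig y := by
        have := congrArg (· / (2 * n + 2) ^ m.length) hc
        have hp : 0 < (2 * n + 2) ^ m.length := by positivity
        simpa [mul_comm (dig _), Nat.mul_add_div hp, Nat.div_eq_of_lt h1, Nat.div_eq_of_lt h2] using this
      rw [h3] at hc
      rw [dig_inj h3, ih m h (by omega)]

/-- half-prefix code -/
def hp (l : List (Fin n × Bool)) : ℕ := code (l.take ((l.length + 1) / 2))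

/-- tie-breaking potential -/
def pot (g : FreeGroup (Fin n)) : ℕ := hp g.toWord + hp g⁻¹.toWord

theorem pot_inv (g : FreeGroup (Fin n)) : pot g⁻¹ = pot g := by
  simp [pot, add_comm]

theorem hp_lt (a b s : List (Fin n × Bool)) (hab : a.length = b.length) (has : a.length ≤ s.length)
    (h : code b < code a) :
    hp (b ++ s) + hp (invRev (b ++ s)) < hp (a ++ s) + hp (invRev (a ++ s)) := by
  simp only [hp, invRev_append, List.take_append, List.length_append, invRev_length, hab, code_append]
  rw [List.take_of_length_le (l := a) (by omega), List.take_of_length_le (l := b) (by omega)]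
  have : (s.length + b.length + 1) / 2 - s.length = 0 := by omega
  rw [this]
  simp only [List.take_zero, List.length_nil, code]
  have h2 : 0 < (2 * n + 2) ^ ((s.take ((b.length + s.length + 1) / 2 - b.length)).length) := by positivity
  have := Nat.mul_lt_mul_of_pos_right h h2
  omega

/-- The tie-breaking lemma. -/
theorem pot_lt (y w : FreeGroup (Fin n)) (a b : List (Fin n × Bool)) (s : List (Fin n × Bool))
    (hy : y.toWord = a ++ invRev b) (hw : w.toWord = a ++ s) (hab : a.length = b.length)
    (hs : a.length ≤ s.length) (hn : (y⁻¹ * w).norm = w.norm) (h : code b < code a) :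
    pot (y⁻¹ * w) < pot w := by
  have h1 : y⁻¹ * w = mk (b ++ s) := by
    rw [← mk_toWord (x := y), ← mk_toWord (x := w), hy, hw, inv_mk]
    simp only [invRev_append, invRev_invRev, ← mul_mk, ← inv_mk]
    group
  have h2 : (y⁻¹ * w).toWord = b ++ s := by
    rw [h1, toWord_mk]
    refine (reduce.red (L := b ++ s)).sublist.eq_of_length ?_
    rw [← toWord_mk, ← h1]
    change (y⁻¹ * w).norm = _
    rw [hn, FreeGroup.norm, hw]
    simp [hab]
  rw [pot, pot, toWord_inv, toWord_inv, h2, hw]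
  exact hp_lt a b s hab hs h

end code

section reduced
variable {α : Type*} [DecidableEq α]

/-- inverse letter -/
def bar (l : α × Bool) : α × Bool := (l.1, !l.2)

theorem mk_bar (l : α × Bool) : (mk [bar l] : FreeGroup α) = (mk [l])⁻¹ := by
  rw [inv_mk]; rfl

theorem length_aux (Y : α × Bool → FreeGroup α) (hbar : ∀ l, Y (bar l) = (Y l)⁻¹)
    (hne : ∀ l, Y l ≠ 1)
    (N1 : ∀ l m, l ≠ m → 2 * gp (Y l) (Y m) ≤ (Y m).norm)
    (N2 : ∀ l m m', l ≠ m → m' ≠ bar m → gp (Y l) (Y m) + gp (Y (bar m)) (Y m') < (Y m).norm)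
    (L : List (α × Bool)) : ∀ l, FreeGroup.IsReduced (l :: L) → ∃ P, P = ((l :: L).map Y).prod ∧
      (∀ k, k ≠ l → gp (Y k) (Y l) < gp P (Y l)) ∧ 0 < gp P (Y l) ∧
      L.length + gp P (Y l) ≤ P.norm := by
  induction L with
  | nil =>
    intro l _
    have h0 : 0 < (Y l).norm := Nat.pos_of_ne_zero fun h => hne l (norm_eq_zero.1 h)
    refine ⟨Y l, by simp, fun k hk => ?_, ?_, ?_⟩
    · have := N1 k l hk
      rw [gp_self]; omega
    · rwa [gp_self]
    · simp [gp_self]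
  | cons l' L ih =>
    intro l hl
    rw [isReduced_cons_cons] at hl
    obtain ⟨P, hP, h1, h2, h3⟩ := ih l' hl.2
    have hll : bar l ≠ l' := by
      intro h
      subst h
      have := hl.1 rfl
      simp [bar] at this
    have h0 : 0 < (Y l).norm := Nat.pos_of_ne_zero fun h => hne l (norm_eq_zero.1 h)
    have h4 := h1 _ hll
    have h5 := gp_ultra (Y (bar l)) (Y l') P
    have h6 := gp_ultra (Y (bar l)) P (Y l')
    rw [gp_comm (Y l') P] at h5
    have h7 : gp (Y (bar l)) P = gp (Y (bar l)) (Y l') := by omega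
    have h8 := gp_spec (Y (bar l)) P
    have h9 := gp_spec (Y l * P) (Y l)
    have h10 : ((Y l * P)⁻¹ * Y l).norm = P.norm := by
      rw [← FreeGroup.norm_inv_eq]; congr 1; group
    rw [hbar, inv_inv, FreeGroup.norm_inv_eq, ← hbar, h7] at h8
    rw [h10] at h9
    have h11 := N1 _ _ hll
    have h12 := N1 _ _ hll.symm
    rw [gp_comm, hbar, FreeGroup.norm_inv_eq, ← hbar] at h12
    refine ⟨Y l * P, by simp [hP], fun k hk => ?_, by omega, ?_⟩
    · have := N2 k l l' hk hll.symm
      omega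
    · simp only [List.length_cons]
      omega

end reduced

section aut
variable {n : ℕ}

/-- Minimality conditions. -/
def Opt (Y : Fin n × Bool → FreeGroup (Fin n)) : Prop :=
  ∀ l m, l.1 ≠ m.1 → (Y l).norm ≤ ((Y m)⁻¹ * Y l).norm ∧
    (((Y m)⁻¹ * Y l).norm = (Y l).norm → pot (Y l) ≤ pot ((Y m)⁻¹ * Y l))

theorem eq_or_bar {l m : Fin n × Bool} (h : l.1 = m.1) (hne : l ≠ m) : l = bar m := by
  refine Prod.ext h ?_
  by_contra h2
  apply hne
  refine Prod.ext h ?_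
  revert h2
  cases h3 : l.2 <;> cases h4 : m.2 <;> simp [bar, h4]

theorem bar_bar (l : Fin n × Bool) : bar (bar l) = l := by simp [bar]

theorem Opt.length_le {Y : Fin n × Bool → FreeGroup (Fin n)} (hY : Opt Y)
    (hbar : ∀ l, Y (bar l) = (Y l)⁻¹) (hne : ∀ l, Y l ≠ 1)
    (L : List (Fin n × Bool)) (hL : FreeGroup.IsReduced L) :
    L.length ≤ ((L.map Y).prod).norm := by
  have strict : ∀ l m, l ≠ m → l.1 = m.1 → 2 * gp (Y l) (Y m) < (Y m).norm := by
    intro l m h h1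
    rw [eq_or_bar h1 h, hbar]
    exact gp_inv_self _ (hne m)
  have N1 : ∀ l m, l ≠ m → 2 * gp (Y l) (Y m) ≤ (Y m).norm := by
    intro l m h
    by_cases h1 : l.1 = m.1
    · exact (strict l m h h1).le
    · have h2 := (hY l m h1).1
      have h3 := gp_spec (Y m) (Y l)
      rw [gp_comm] at h3
      omega
  have N2 : ∀ l m m', l ≠ m → m' ≠ bar m →
      gp (Y l) (Y m) + gp (Y (bar m)) (Y m') < (Y m).norm := by
    intro l m m' hl hm
    by_contra hcon
    have nb : (Y (bar m)).norm = (Y m).norm := by rw [hbar, FreeGroup.norm_inv_eq]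
    have e1 := N1 l m hl
    have e2 := N1 m' (bar m) hm
    have e1' := N1 m l hl.symm
    have e2' := N1 (bar m) m' hm.symm
    rw [gp_comm] at e2 e1'
    have d1 : l.1 ≠ m.1 := fun h => by
      have := strict l m hl h
      omega
    have d2 : m'.1 ≠ (bar m).1 := fun h => by
      have := strict m' (bar m) hm h
      rw [gp_comm] at this
      omega
    set c := gp (Y l) (Y m) with hc
    have hc2 : gp (Y (bar m)) (Y m') = c := by omega
    have p1 := (le_cp_iff (Y l).toWord (Y m).toWord c).1 le_rfl
    have p2 := (le_cp_iff (Y (bar m)).toWord (Y m').toWord c).1 hc2.ge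
    have lm : (Y m).toWord.length = 2 * c := by
      change (Y m).norm = _
      omega
    have ll : (Y l).toWord.length = (Y l).norm := rfl
    have lm' : (Y m').toWord.length = (Y m').norm := rfl
    obtain ⟨a, ha⟩ : ∃ a, a = (Y m).toWord.take c := ⟨_, rfl⟩
    obtain ⟨b, hb⟩ : ∃ b, b = invRev ((Y m).toWord.drop c) := ⟨_, rfl⟩
    have la : a.length = c := by simp [ha, lm]; omega
    have lb : b.length = c := by simp [hb, lm]; omega
    have wy : (Y m).toWord = a ++ invRev b := by simp [ha, hb]
    have wy' : (Y (bar m)).toWord = b ++ invRev a := by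
      rw [hbar, toWord_inv, wy]; simp
    have wl : (Y l).toWord = a ++ (Y l).toWord.drop c := by
      rw [ha, ← p1.2.2, List.take_append_drop]
    have hb2 : (Y (bar m)).toWord.take c = b := by
      rw [wy', List.take_append_of_le_length lb.ge, List.take_of_length_le lb.le]
    have wm' : (Y m').toWord = b ++ (Y m').toWord.drop c := by
      rw [← hb2, p2.2.2, List.take_append_drop]
    have g1 := gp_spec (Y m) (Y l)
    rw [gp_comm] at g1
    have g2 := gp_spec (Y (bar m)) (Y m')
    have n1 : ((Y m)⁻¹ * Y l).norm = (Y l).norm := by omega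
    have n2 : ((Y (bar m))⁻¹ * Y m').norm = (Y m').norm := by omega
    have o1 := (hY l m d1).2 n1
    have o2 := (hY m' (bar m) d2).2 n2
    have c1 : ¬ code b < code a := fun h =>
      absurd (pot_lt _ _ a b _ wy wl (by omega) (by rw [List.length_drop]; omega) n1 h) o1.not_gt
    have c2 : ¬ code a < code b := fun h =>
      absurd (pot_lt _ _ b a _ wy' wm' (by omega) (by rw [List.length_drop]; omega) n2 h) o2.not_gt
    have hab : a = b := code_inj _ _ (by omega) (by omega)
    apply hne m
    rw [← mk_toWord (x := Y m), wy, hab, ← mul_mk, ← inv_mk, mul_inv_cancel]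
  cases L with
  | nil => simp
  | cons l L =>
    obtain ⟨P, hP, -, h2, h3⟩ := length_aux Y hbar hne N1 N2 L l hL
    rw [← hP, List.length_cons]
    omega

/-- An involutive automorphism. -/
def invol (f : Fin n → FreeGroup (Fin n)) (h : ∀ i, lift f (f i) = of i) :
    MulAut (FreeGroup (Fin n)) :=
  MonoidHom.toMulEquiv (lift f) (lift f) (by ext i; simp [h]) (by ext i; simp [h])

theorem invol_of (f : Fin n → FreeGroup (Fin n)) (h) (i : Fin n) : invol f h (of i) = f i := by
  simp [invol]

theorem ext_of {β γ : MulAut (FreeGroup (Fin n))} (h : ∀ i, β (of i) = γ (of i)) : β = γ := by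
  apply MulEquiv.toMonoidHom_injective
  ext i
  exact h i

theorem invol_sq (f : Fin n → FreeGroup (Fin n)) (h) : invol f h ^ 2 = 1 := by
  apply ext_of
  intro i
  rw [pow_two, MulAut.mul_apply, invol_of]
  exact h i

theorem mk_letter (l : Fin n × Bool) :
    (mk [l] : FreeGroup (Fin n)) = if l.2 then of l.1 else (of l.1)⁻¹ := by
  obtain ⟨i, b⟩ := l
  cases b
  · simp [of, inv_mk, invRev]
  · simp [of]

theorem exists_move (K : Subgroup (MulAut (FreeGroup (Fin n))))
    (hK : ∀ g, IsOfFinOrder g → g ∈ K) (l m : Fin n × Bool) (h : l.1 ≠ m.1) :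
    ∃ ν ∈ K, ν (mk [l]) = (mk [m])⁻¹ * mk [l] ∧ ∀ i, i ≠ l.1 → ν (of i) = of i := by
  obtain ⟨i, b⟩ := l
  obtain ⟨j, c⟩ := m
  simp only at h
  let fB : Fin n → FreeGroup (Fin n) := fun k => if k = j then (of j)⁻¹ else of k
  have hB : ∀ k, lift fB (fB k) = of k := by
    intro k
    by_cases hk : k = j <;> simp [fB, hk]
  let u : FreeGroup (Fin n) := mk [(j, c)]
  let fE : Fin n → FreeGroup (Fin n) := fun k =>
    if k = i then (if b then u⁻¹ * of i else of i * u) else if k = j then (of j)⁻¹ else of k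
  have hEj : lift fE (of j) = (of j)⁻¹ := by simp [fE, h.symm]
  have hu : lift fE u = u⁻¹ := by
    simp only [u, mk_letter]
    cases c
    · simp only [Bool.false_eq_true, if_false, _root_.map_inv, hEj]
    · simp only [if_true, hEj]
  have hi : fE i = (if b then u⁻¹ * of i else of i * u) := by simp [fE]
  have hE : ∀ k, lift fE (fE k) = of k := by
    intro k
    by_cases hk : k = i
    · subst hk
      rw [hi]
      cases b
      · simp only [Bool.false_eq_true, if_false, _root_.map_mul, hu, lift_apply_of, hi]
        group
      · simp only [if_true, _root_.map_mul, _root_.map_inv, hu, lift_apply_of, hi]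
        group
    · by_cases hk' : k = j
      · subst hk'
        have : fE k = (of k)⁻¹ := by simp [fE, hk]
        rw [this, _root_.map_inv, hEj, inv_inv]
      · simp [fE, hk, hk']
  have fin2 : ∀ f hf, invol (n := n) f hf ∈ K := fun f hf =>
    hK _ (isOfFinOrder_iff_pow_eq_one.2 ⟨2, by norm_num, invol_sq f hf⟩)
  refine ⟨invol fE hE * invol fB hB, K.mul_mem (fin2 _ _) (fin2 _ _), ?_, ?_⟩
  · have h1 : (invol fE hE * invol fB hB) (of i) = fE i := by
      rw [MulAut.mul_apply, invol_of]
      simp only [fB, h, if_false, invol_of]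
    change _ = u⁻¹ * _
    rw [mk_letter]
    cases b
    · simp only [Bool.false_eq_true, if_false, _root_.map_inv, h1, hi, mul_inv_rev]
    · simp only [if_true, h1, hi]
  · intro k hk
    simp only at hk
    rw [MulAut.mul_apply, invol_of]
    by_cases hk' : k = j
    · subst hk'
      simp only [fB, if_true, _root_.map_inv, invol_of, fE, hk, if_false, inv_inv]
    · simp only [fB, hk', if_false, invol_of, fE, hk]

theorem sum_move (F : FreeGroup (Fin n) → ℕ) (hF : ∀ g, F g⁻¹ = F g)
    (β ν : MulAut (FreeGroup (Fin n))) (l : Fin n × Bool)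
    (h : ∀ i, i ≠ l.1 → ν (of i) = of i) :
    (∑ i, F ((β * ν) (of i))) + F (β (mk [l])) = (∑ i, F (β (of i))) + F (β (ν (mk [l]))) := by
  have key : ∀ γ : MulAut (FreeGroup (Fin n)), F (γ (mk [l])) = F (γ (of l.1)) := by
    intro γ
    rw [mk_letter]
    split_ifs
    · rfl
    · rw [_root_.map_inv, hF]
  have h2 := key (β * ν)
  rw [MulAut.mul_apply] at h2
  rw [h2, key β, ← Finset.add_sum_erase _ _ (Finset.mem_univ l.1),
    ← Finset.add_sum_erase _ (fun i => F (β (of i))) (Finset.mem_univ l.1)]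
  have : ∑ x ∈ Finset.univ.erase l.1, F ((β * ν) (of x)) =
      ∑ x ∈ Finset.univ.erase l.1, F (β (of x)) := by
    refine Finset.sum_congr rfl fun x hx => ?_
    rw [MulAut.mul_apply, h x (Finset.ne_of_mem_erase hx)]
  rw [this]
  omega

theorem exists_opt (K : Subgroup (MulAut (FreeGroup (Fin n))))
    (hK : ∀ g, IsOfFinOrder g → g ∈ K) (β : MulAut (FreeGroup (Fin n))) :
    ∃ ν ∈ K, Opt (fun l => (β * ν) (mk [l])) := by
  let S : MulAut (FreeGroup (Fin n)) → ℕ ×ₗ ℕ := fun γ =>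
    toLex (∑ i, (γ (of i)).norm, ∑ i, pot (γ (of i)))
  obtain ⟨ν, hν, hmin⟩ := (InvImage.wf (fun ν => S (β * ν)) (wellFounded_lt (α := ℕ ×ₗ ℕ))).has_min
    (K : Set (MulAut (FreeGroup (Fin n)))) ⟨1, K.one_mem⟩
  refine ⟨ν, hν, fun l m hlm => ?_⟩
  obtain ⟨μ, hμ, h1, h2⟩ := exists_move K hK l m hlm
  have h3 := hmin (ν * μ) (K.mul_mem hν hμ)
  simp only [InvImage, S, Prod.Lex.toLex_lt_toLex, not_or, not_and, ← mul_assoc] at h3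
  have s1 := sum_move FreeGroup.norm (fun g => FreeGroup.norm_inv_eq) (β * ν) μ l h2
  have s2 := sum_move pot pot_inv (β * ν) μ l h2
  rw [h1, _root_.map_mul, _root_.map_inv] at s1 s2
  obtain ⟨h3, h4⟩ := h3
  beta_reduce
  refine ⟨by omega, fun he => ?_⟩
  have := h4 (by omega)
  omega

theorem finOrder_of_letters (γ : MulAut (FreeGroup (Fin n)))
    (h : ∀ i, ∃ l, γ (of i) = mk [l]) : IsOfFinOrder γ := by
  rw [← finite_powers]
  let S : Set (FreeGroup (Fin n)) := Set.range fun l : Fin n × Bool => mk [l]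
  have hS : S.Finite := Set.finite_range _
  have hγ : ∀ s ∈ S, γ s ∈ S := by
    rintro _ ⟨l, rfl⟩
    obtain ⟨m, hm⟩ := h l.1
    simp only [mk_letter l]
    split_ifs
    · exact ⟨m, hm.symm⟩
    · refine ⟨bar m, ?_⟩
      simp only [mk_bar, _root_.map_inv, hm]
  have hfin : {δ : MulAut (FreeGroup (Fin n)) | ∀ i, δ (of i) ∈ S}.Finite := by
    refine Set.Finite.of_finite_image (f := fun δ i => δ (of i)) ?_ ?_
    · refine (Set.Finite.pi' (fun _ : Fin n => hS)).subset ?_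
      rintro _ ⟨δ, hδ, rfl⟩
      exact hδ
    · intro δ _ ε _ hde
      exact ext_of fun i => congrFun hde i
  refine hfin.subset ?_
  rintro _ ⟨k, rfl⟩
  intro i
  have : ∀ s ∈ S, (γ ^ k) s ∈ S := by
    induction k with
    | zero => intro s hs; simpa using hs
    | succ k ih =>
      intro s hs
      rw [pow_succ, MulAut.mul_apply]
      exact ih _ (hγ s hs)
  exact this _ ⟨(i, true), rfl⟩

/-- `Aut (F_n)` is generated by torsion. -/
theorem mem_of_torsion (K : Subgroup (MulAut (FreeGroup (Fin n))))
    (hK : ∀ g, IsOfFinOrder g → g ∈ K) (β : MulAut (FreeGroup (Fin n))) : β ∈ K := by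
  obtain ⟨ν, hν, hopt⟩ := exists_opt K hK β
  have hb : ∀ l, (β * ν) (mk [bar l]) = ((β * ν) (mk [l]))⁻¹ := by
    intro l; rw [mk_bar, _root_.map_inv]
  have hne : ∀ l, (β * ν) (mk [l]) ≠ 1 := by
    intro l hl
    rw [map_eq_one_iff _ (β * ν).injective, mk_letter] at hl
    split_ifs at hl
    · exact of_ne_one _ hl
    · exact of_ne_one _ (inv_eq_one.1 hl)
  have hprod : ∀ L : List (Fin n × Bool),
      (L.map fun l => (β * ν) (mk [l])).prod = (β * ν) (mk L) := by
    intro L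
    induction L with
    | nil => simp [← one_eq_mk]
    | cons a L ih =>
      rw [List.map_cons, List.prod_cons, ih, ← _root_.map_mul, mul_mk]; rfl
  have hfo : IsOfFinOrder (β * ν)⁻¹ := by
    refine finOrder_of_letters _ fun i => ?_
    obtain ⟨w, hw⟩ : ∃ w, w = (β * ν)⁻¹ (of i) := ⟨_, rfl⟩
    have hw' : (β * ν) w = of i := by rw [hw]; exact (β * ν).apply_symm_apply _
    have h1 := hopt.length_le hb hne w.toWord isReduced_toWord
    rw [hprod, mk_toWord, hw', FreeGroup.norm_of] at h1
    rw [← hw]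
    match hL : w.toWord, h1 with
    | [], _ =>
      rw [toWord_eq_nil_iff] at hL
      rw [hL, _root_.map_one] at hw'
      exact absurd hw'.symm (of_ne_one i)
    | [l], _ => exact ⟨l, by rw [← hL, mk_toWord]⟩
    | _ :: _ :: _, h => simp at h
  have := K.mul_mem (K.inv_mem (hK _ hfo)) (K.inv_mem hν)
  simpa using this

end aut

end NielsenAux


theorem IsDiffI.eq_one_of_finOrder {f : Equiv.Perm ℝ} (hf : IsDiffI f) (h : IsOfFinOrder f) :
    f = 1 := by
  obtain ⟨k, hk, hfk⟩ := isOfFinOrder_iff_pow_eq_one.1 h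
  obtain ⟨h1, h2, h3⟩ := hf
  have hmono : StrictMonoOn f (Set.Icc 0 1) := by
    refine strictMonoOn_of_deriv_pos (convex_Icc 0 1) h2.continuousOn fun x hx => ?_
    rw [← derivWithin_of_mem_nhds (mem_interior_iff_mem_nhds.1 hx)]
    exact h3 x (interior_subset hx)
  have hmaps : ∀ x ∈ Set.Icc (0 : ℝ) 1, f x ∈ Set.Icc (0 : ℝ) 1 := by
    intro x hx
    by_contra hc
    have := f.injective (h1 _ hc)
    rw [this] at hc
    exact hc hx
  have hmapsk : ∀ (m : ℕ), ∀ x ∈ Set.Icc (0 : ℝ) 1, (f ^ m) x ∈ Set.Icc (0 : ℝ) 1 := by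
    intro m
    induction m with
    | zero => intro x hx; simpa using hx
    | succ m ih =>
      intro x hx
      rw [pow_succ', Equiv.Perm.mul_apply]
      exact hmaps _ (ih x hx)
  obtain ⟨j, rfl⟩ : ∃ j, k = j + 1 := ⟨k - 1, by omega⟩
  ext x
  by_cases hx : x ∈ Set.Icc (0 : ℝ) 1
  · have hx1 : (f ^ (j + 1)) x = x := by rw [hfk]; rfl
    rcases lt_trichotomy (f x) x with hlt | heq | hgt
    · have : ∀ m : ℕ, (f ^ (m + 1)) x < x := by
        intro m
        induction m with
        | zero => simpa using hlt
        | succ m ih =>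
          rw [pow_succ', Equiv.Perm.mul_apply]
          exact (hmono (hmapsk _ x hx) hx ih).trans hlt
      exact absurd hx1 (this j).ne
    · simpa using heq
    · have : ∀ m : ℕ, x < (f ^ (m + 1)) x := by
        intro m
        induction m with
        | zero => simpa using hgt
        | succ m ih =>
          rw [pow_succ', Equiv.Perm.mul_apply]
          exact hgt.trans (hmono hx (hmapsk _ x hx) ih)
      exact absurd hx1 (this j).ne'
  · simpa using h1 x hx

/-- **Actions of `Aut(Fₙ)` on the interval are trivial.** For `n ≥ 6`, any group
homomorphism from `Aut(Fₙ)` to `Diff²₊(I)` (realized as a homomorphism into the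
permutations of `ℝ` all of whose values are C² diffeomorphisms of `[0,1]`) sends
every automorphism to the identity. -/
theorem aut_freeGroup_action_on_interval_trivial (n : ℕ) (hn : 6 ≤ n)
    (φ : MulAut (FreeGroup (Fin n)) →* Equiv.Perm ℝ)
    (hφ : ∀ g, IsDiffI (φ g)) :
    ∀ g, φ g = 1 := by
  intro g
  exact NielsenAux.mem_of_torsion φ.ker
    (fun γ hγ => (hφ γ).eq_one_of_finOrder (φ.isOfFinOrder hγ)) g
end

section
/- Baumslag–Solitar groups in Diff^ω₊(ℝ): For any integers n > m ≥ 1, there exists an injective group homomorphism from the Baumslag–Solitar group BS(m,n) = ⟨a, b | a bᵐ a⁻¹ = bⁿ⟩ into the group of orientation-preserving real-analytic diffeomorphisms of ℝ. Equivalently, there exist bijections g, h : ℝ → ℝ, each real-analytic with everywhere positive derivative, satisfying g ∘ hᵐ ∘ g⁻¹ = hⁿ, such that the subgroup of bijections of ℝ generated by g and h is isomorphic to BS(m,n) via a ↦ g, b ↦ h. -/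
/-- The single defining relation of the Baumslag–Solitar group
`BS(m,n) = ⟨a, b | a bᵐ a⁻¹ = bⁿ⟩`, with `a = FreeGroup.of 0` and `b = FreeGroup.of 1`. -/
abbrev BSRels (m n : ℕ) : Set (FreeGroup (Fin 2)) :=
  {FreeGroup.of 0 * FreeGroup.of 1 ^ m * (FreeGroup.of 0)⁻¹ * (FreeGroup.of 1 ^ n)⁻¹}

section helpers
open Real

lemma step_exists (δ η : ℝ) (hδ : 0 < δ) (hδ2 : δ < 1/2) (hη : 0 < η) : ∃ A : ℝ → ℝ,
    (∀ x, AnalyticAt ℝ A x) ∧ (∀ x, 0 < deriv A x) ∧ (∀ x, A (x+1) = A x + 1) ∧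
    (∀ x, |A x - x| ≤ 1/2) ∧ (∀ y, δ ≤ y → y ≤ 1 - δ → |A y - 1/2| < η) := by
  have hpi := Real.pi_pos
  have hs : 0 < sin (π * δ) := sin_pos_of_pos_of_lt_pi (by positivity) (by nlinarith)
  have hc1 : cos (2*π*δ) < 1 := by
    have := cos_sq (π * δ)
    have h2 := sin_sq_add_cos_sq (π * δ)
    rw [show 2 * (π * δ) = 2*π*δ by ring] at this
    nlinarith
  have hlim : Filter.Tendsto (fun ρ : ℝ => δ + arctan (ρ * sin (2*π*δ) / (1 - ρ * cos (2*π*δ))) / π)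
      (nhdsWithin 1 (Set.Iio 1)) (nhds (1/2)) := by
    have hco : ContinuousAt (fun ρ : ℝ => δ + arctan (ρ * sin (2*π*δ) / (1 - ρ * cos (2*π*δ))) / π) 1 := by
      have : 1 - 1 * cos (2*π*δ) ≠ 0 := by linarith
      have h1 : ContinuousAt (fun ρ : ℝ => ρ * sin (2*π*δ) / (1 - ρ * cos (2*π*δ))) 1 :=
        ContinuousAt.div (by fun_prop) (by fun_prop) this
      exact continuousAt_const.add ((continuous_arctan.continuousAt.comp h1).div_const _)
    have hv : δ + arctan (1 * sin (2*π*δ) / (1 - 1 * cos (2*π*δ))) / π = 1/2 := by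
      have : 1 * sin (2*π*δ) / (1 - 1 * cos (2*π*δ)) = tan (π/2 - π*δ) := by
        rw [tan_pi_div_two_sub, tan_eq_sin_div_cos, inv_div, show 2*π*δ = 2*(π*δ) by ring, sin_two_mul,
          cos_two_mul]
        have h2 := sin_sq_add_cos_sq (π * δ)
        have h3 : 1 - 1 * (2 * cos (π*δ)^2 - 1) = 2 * sin (π*δ)^2 := by linarith
        rw [h3]; field_simp
      rw [this, arctan_tan (by nlinarith) (by nlinarith)]
      field_simp; ring
    have := hco.tendsto
    rw [hv] at this
    exact this.mono_left nhdsWithin_le_nhds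
  have hev := hlim.eventually (lt_mem_nhds (show 1/2 - η < 1/2 by linarith))
  have hev2 : ∀ᶠ ρ : ℝ in nhdsWithin 1 (Set.Iio 1), 0 < ρ ∧ ρ < 1 := by
    filter_upwards [Ioo_mem_nhdsLT (show (0:ℝ) < 1 by norm_num)] with ρ h using h
  obtain ⟨ρ, hρ, h0, h1⟩ := (hev.and hev2).exists
  have hden : ∀ x : ℝ, 0 < 1 - ρ * cos (2*π*x) := fun x => by nlinarith [cos_le_one (2*π*x)]
  let A : ℝ → ℝ := fun x => x + arctan (ρ * sin (2*π*x) / (1 - ρ * cos (2*π*x))) / π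
  have hder : ∀ x, HasDerivAt A ((1-ρ^2)/(1 - 2*ρ*cos (2*π*x) + ρ^2)) x := by
    intro x
    have hl : HasDerivAt (fun x : ℝ => 2*π*x) (2*π) x := by
      simpa using (hasDerivAt_id x).const_mul (2*π)
    have hq := (hl.sin.const_mul ρ).div ((hl.cos.const_mul ρ).const_sub 1) (hden x).ne'
    have := (hasDerivAt_id x).add ((hq.arctan).div_const π)
    refine this.congr_deriv ?_
    have hd := hden x
    have h2 := sin_sq_add_cos_sq (2*π*x)
    simp only [Pi.div_apply]
    generalize sin (2*π*x) = s at *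
    generalize cos (2*π*x) = c at *
    have hD : 1 - 2*ρ*c + ρ^2 ≠ 0 := by nlinarith
    have hs2 : s^2 = 1 - c^2 := by linarith
    have e : 1 + (ρ*s/(1-ρ*c))^2 = (1 - 2*ρ*c + ρ^2)/(1-ρ*c)^2 := by
      field_simp; linear_combination ρ^2 * h2
    rw [e]
    field_simp
    linear_combination (-2*ρ^2) * h2
  have hderpos : ∀ x, 0 < (1-ρ^2)/(1 - 2*ρ*cos (2*π*x) + ρ^2) := fun x => by
    apply div_pos <;> nlinarith [cos_le_one (2*π*x)]
  have hmono : StrictMono A := strictMono_of_deriv_pos fun x => by rw [(hder x).deriv]; exact hderpos x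
  have hodd : A (1 - δ) = 1 - A δ := by
    simp only [A]
    rw [show 2*π*(1-δ) = 2*π - 2*π*δ by ring, sin_two_pi_sub, cos_two_pi_sub, mul_neg, neg_div, arctan_neg]
    ring
  have hρ' : 1/2 - η < A δ := hρ
  refine ⟨A, ?_, ?_, ?_, ?_, ?_⟩
  · intro x
    refine ContDiffAt.analyticAt ?_
    have h3 := (hden x).ne'
    have : ContDiffAt ℝ ⊤ (fun x : ℝ => ρ * sin (2*π*x) / (1 - ρ * cos (2*π*x))) x :=
      ContDiffAt.div (by fun_prop) (by fun_prop) h3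
    exact contDiffAt_id.add ((contDiff_arctan.contDiffAt.comp x this).div_const _)
  · intro x; rw [(hder x).deriv]; exact hderpos x
  · intro x
    simp only [A]
    rw [show 2*π*(x+1) = 2*π*x + 2*π by ring, sin_add_two_pi, cos_add_two_pi]; ring
  · intro x
    simp only [A, add_sub_cancel_left]
    rw [abs_div, abs_of_pos hpi, div_le_iff₀ hpi, abs_le]
    have := arctan_lt_pi_div_two (ρ * sin (2*π*x) / (1 - ρ * cos (2*π*x)))
    have := neg_pi_div_two_lt_arctan (ρ * sin (2*π*x) / (1 - ρ * cos (2*π*x)))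
    constructor <;> linarith
  · intro y h2 h3
    have h4 := hmono.monotone h2
    have h5 := hmono.monotone h3
    rw [abs_lt]; constructor <;> linarith

/-- The subgroup of analytic orientation-preserving diffeos. -/
def anaDiff : Subgroup (Equiv.Perm ℝ) where
  carrier := {f | (∀ x : ℝ, AnalyticAt ℝ f x) ∧ (∀ x : ℝ, 0 < deriv f x)}
  one_mem' := ⟨fun x => analyticAt_id, fun x => by simp [Equiv.Perm.coe_one]⟩
  mul_mem' := by
    rintro f g ⟨hf, hf'⟩ ⟨hg, hg'⟩
    refine ⟨fun x => (hf (g x)).comp (hg x), fun x => ?_⟩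
    rw [Equiv.Perm.coe_mul, deriv_comp x (hf _).differentiableAt (hg _).differentiableAt]
    exact mul_pos (hf' _) (hg' _)
  inv_mem' := by
    rintro f ⟨hf, hf'⟩
    have hmono : StrictMono f := strictMono_of_deriv_pos hf'
    have hcont : Continuous f := continuous_iff_continuousAt.2 fun x => (hf x).continuousAt
    let F : ℝ ≃ₜ ℝ := (hmono.orderIsoOfSurjective f f.surjective).toHomeomorph
    have hF : ∀ x, F x = f x := fun x => rfl
    have hFs : ∀ x, F.symm x = (f⁻¹ : Equiv.Perm ℝ) x := fun x => by
      apply F.injective; rw [F.apply_symm_apply, hF]; simp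
    have hFs' : (F.symm : ℝ → ℝ) = (f⁻¹ : Equiv.Perm ℝ) := funext hFs
    have hd : ∀ x, HasDerivAt F (deriv f x) x := fun x => (hf x).differentiableAt.hasDerivAt
    have hcd : ContDiff ℝ ⊤ (F.symm : ℝ → ℝ) :=
      F.contDiff_symm_deriv (fun x => (hf' x).ne') hd
        (contDiff_iff_contDiffAt.2 fun x => (hf x).contDiffAt)
    rw [hFs'] at hcd
    have han : ∀ x, AnalyticAt ℝ (f⁻¹ : Equiv.Perm ℝ) x := fun x =>
      hcd.contDiffAt.analyticAt
    refine ⟨han, fun x => ?_⟩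
    have h1 : HasDerivAt (f⁻¹ : Equiv.Perm ℝ) (deriv f ((f⁻¹ : Equiv.Perm ℝ) x))⁻¹ x :=
      HasDerivAt.of_local_left_inverse (f := f) (han x).continuousAt
        ((hf _).differentiableAt.hasDerivAt) (hf' _).ne' (Filter.Eventually.of_forall fun y => by simp)
    have h2 := hf' ((f⁻¹ : Equiv.Perm ℝ) x)
    rw [h1.deriv]
    exact inv_pos.2 h2

/-- Index of the associated subgroup. -/
def cc (m n : ℕ) (e : Bool) : ℤ := if e then m else n

/-- `a` or its inverse. -/
def tt {G : Type*} [Group G] (a : G) (e : Bool) : G := if e then a else a⁻¹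

/-- Nonempty reduced words starting with `a ^ ±1`. -/
inductive Red {G : Type*} [Group G] (m n : ℕ) (a b : G) : Bool → G → Prop
  | base (e : Bool) (k : ℤ) : Red m n a b e (tt a e * b ^ k)
  | step (e e' : Bool) (k : ℤ) (h : G) : Red m n a b e' h → (e' = e ∨ ¬ cc m n e ∣ k) →
      Red m n a b e (tt a e * b ^ k * h)

/-- Elements which have a reduced form. -/
def HasForm {G : Type*} [Group G] (m n : ℕ) (a b g : G) : Prop :=
  (∃ k : ℤ, g = b ^ k) ∨ ∃ (k : ℤ) (e : Bool) (h : G), Red m n a b e h ∧ g = b ^ k * h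

lemma HasForm.bpow {G : Type*} [Group G] {m n : ℕ} {a b g : G} (h : HasForm m n a b g) (j : ℤ) :
    HasForm m n a b (b ^ j * g) := by
  rcases h with ⟨k, rfl⟩ | ⟨k, e, h, hr, rfl⟩
  · exact Or.inl ⟨j + k, (zpow_add _ _ _).symm⟩
  · exact Or.inr ⟨j + k, e, h, hr, by rw [zpow_add, mul_assoc]⟩

lemma tt_conj {G : Type*} [Group G] {m n : ℕ} {a b : G} (hab : a * b ^ m * a⁻¹ = b ^ n)
    (e : Bool) (j : ℤ) : tt a e * b ^ (cc m n e * j) * tt a (!e) = b ^ (cc m n (!e) * j) := by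
  have h1 : a * b ^ ((m : ℤ) * j) * a⁻¹ = b ^ ((n : ℤ) * j) := by
    rw [zpow_mul, zpow_mul, zpow_natCast, zpow_natCast, ← hab, conj_zpow]
  cases e
  · simp only [tt, cc, Bool.not_false, if_true, Bool.false_eq_true, if_false]
    rw [← h1]; group
  · simpa [tt, cc] using h1

lemma HasForm.tmul {G : Type*} [Group G] {m n : ℕ} {a b g : G} (hab : a * b ^ m * a⁻¹ = b ^ n)
    (h : HasForm m n a b g) (e : Bool) : HasForm m n a b (tt a e * g) := by
  rcases h with ⟨k, rfl⟩ | ⟨k, e', h, hr, rfl⟩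
  · exact Or.inr ⟨0, e, _, Red.base e k, by simp⟩
  · by_cases hc : e' = e ∨ ¬ cc m n e ∣ k
    · exact Or.inr ⟨0, e, _, Red.step e e' k h hr hc, by simp [mul_assoc]⟩
    · push Not at hc
      obtain ⟨hne, j, rfl⟩ := hc
      have he : e' = !e := by cases e <;> cases e' <;> simp_all
      subst he
      have key : ∀ x : G, tt a e * (b ^ (cc m n e * j) * (tt a (!e) * x))
          = b ^ (cc m n (!e) * j) * x := fun x => by
        rw [← tt_conj hab]; simp only [mul_assoc]
      cases hr with
      | base _ k' => rw [key]; exact HasForm.bpow (Or.inl ⟨k', rfl⟩) _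
      | step _ e'' k' h' hr' _ =>
        rw [mul_assoc (tt a (!e)), key]
        exact HasForm.bpow (Or.inr ⟨k', e'', h', hr', rfl⟩) _

noncomputable def oo (e : Bool) : ℝ := if e then 0 else 1/2

/-- The ping-pong sets. -/
def UU (m n : ℕ) (e : Bool) : Set ℝ := {x | ∃ j : ℤ, |x - oo e - (cc m n (!e) * j : ℤ)| < 1/8}

lemma far_half (z : ℤ) (x : ℝ) (h : |x| < 1/4) : x + z ≠ 1/2 := by
  intro h'
  rw [abs_lt] at h
  have h1 : (0:ℝ) < z := by linarith
  have h2 : (z:ℝ) < 1 := by linarith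
  have h3 : 0 < z := by exact_mod_cast h1
  have h4 : z < 1 := by exact_mod_cast h2
  omega

lemma quarter_notMem (m n : ℕ) (e : Bool) (k : ℤ) (x : ℝ) (hx : x ∈ UU m n e) :
    x + k ≠ 1/4 := by
  rintro h
  obtain ⟨j, hj⟩ := hx
  have hxe : x = 1/4 - k := by linarith
  subst hxe
  generalize cc m n (!e) * j = z at hj
  rw [abs_lt] at hj
  obtain ⟨h1, h2⟩ := hj
  cases e
  · simp only [oo, Bool.false_eq_true, if_false] at h1 h2
    have h3 : ((k + z : ℤ) : ℝ) < 0 := by push_cast; linarith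
    have h4 : (-1 : ℝ) < ((k + z : ℤ) : ℝ) := by push_cast; linarith
    have h3' : k + z < 0 := by exact_mod_cast h3
    have h4' : -1 < k + z := by exact_mod_cast h4
    omega
  · simp only [oo, if_true] at h1 h2
    have h3 : ((k + z : ℤ) : ℝ) < 1 := by push_cast; linarith
    have h4 : (0 : ℝ) < ((k + z : ℤ) : ℝ) := by push_cast; linarith
    have h3' : k + z < 1 := by exact_mod_cast h3
    have h4' : 0 < k + z := by exact_mod_cast h4
    omega

lemma step_notMem (m n : ℕ) (e e' : Bool) (k : ℤ) (hc : e' = e ∨ ¬ cc m n e ∣ k) (y : ℝ)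
    (hy : y ∈ UU m n e') : y + k ∉ UU m n (!e) := by
  rintro ⟨j, hj⟩
  obtain ⟨j', hj'⟩ := hy
  rw [Bool.not_not] at hj
  by_cases he : e' = e
  · subst he
    generalize cc m n e' * j = z at hj
    generalize cc m n (!e') * j' = z' at hj'
    rw [abs_lt] at hj hj'
    obtain ⟨h1, h2⟩ := hj
    obtain ⟨h3, h4⟩ := hj'
    cases e' <;> simp only [oo, Bool.not_false, Bool.not_true, if_true, Bool.false_eq_true,
      if_false] at h1 h2 h3 h4
    · refine far_half (z - z' - k) (1/2 - (z - z' - k)) ?_ (by push_cast; ring)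
      rw [abs_lt]; constructor <;> linarith
    · refine far_half (z' - z + k) (1/2 - (z' - z + k)) ?_ (by push_cast; ring)
      rw [abs_lt]; constructor <;> linarith
  · have hk := hc.resolve_left he
    have he' : e' = !e := by cases e <;> cases e' <;> simp_all
    subst he'
    rw [Bool.not_not] at hj'
    apply hk
    refine ⟨j - j', ?_⟩
    rw [mul_sub]
    generalize cc m n e * j = z at hj
    generalize cc m n e * j' = z' at hj'
    rw [abs_lt] at hj hj'
    have h3 : ((k + z' - z : ℤ) : ℝ) < 1 := by push_cast; linarith
    have h4 : (-1 : ℝ) < ((k + z' - z : ℤ) : ℝ) := by push_cast; linarith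
    have h3' : k + z' - z < 1 := by exact_mod_cast h3
    have h4' : -1 < k + z' - z := by exact_mod_cast h4
    omega

lemma red_mem {G : Type*} [Group G] {m n : ℕ} {a b : G} (φ : G →* Equiv.Perm ℝ)
    (hb : ∀ (k : ℤ) (x : ℝ), φ (b ^ k) x = x + k)
    (ha : ∀ (e : Bool) (x : ℝ), x ∉ UU m n (!e) → φ (tt a e) x ∈ UU m n e)
    {e : Bool} {g : G} (hg : Red m n a b e g) : φ g (1/4) ∈ UU m n e := by
  induction hg with
  | base e k =>
    rw [map_mul, Equiv.Perm.mul_apply, hb]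
    refine ha _ _ fun h => quarter_notMem m n _ (-k) _ h ?_
    push_cast; ring
  | step e e' k h _ hc ih =>
    rw [map_mul, map_mul, Equiv.Perm.mul_apply, Equiv.Perm.mul_apply, hb]
    exact ha _ _ (step_notMem m n e e' k hc _ ih)

lemma exists_a (m n : ℕ) (hm : 1 ≤ m) (hn : 1 ≤ n) : ∃ f : Equiv.Perm ℝ, f ∈ anaDiff ∧
    (∀ x, f (x + m) = f x + n) ∧ ∀ x, x ∉ UU m n false → f x ∈ UU m n true := by
  have hm' : (1:ℝ) ≤ m := by exact_mod_cast hm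
  have hn' : (1:ℝ) ≤ n := by exact_mod_cast hn
  have hm0 : (0:ℝ) < m := by linarith
  have hn0 : (0:ℝ) < n := by linarith
  obtain ⟨A, hA1, hA2, hA3, hA4, hA5⟩ := step_exists (1/(8*m)) (1/(8*n)) (by positivity)
    (by rw [div_lt_div_iff₀ (by positivity) (by norm_num)]; linarith) (by positivity)
  let f : ℝ → ℝ := fun x => n * (A ((x - 1/2)/m) - 1/2)
  have hder : ∀ x, HasDerivAt f (n * (deriv A ((x-1/2)/m) * (1/m))) x := by
    intro x
    have h1 : HasDerivAt (fun x : ℝ => (x - 1/2)/m) (1/m) x :=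
      ((hasDerivAt_id x).sub_const _).div_const _
    exact (((hA1 _).differentiableAt.hasDerivAt.comp x h1).sub_const (1/2)).const_mul (n:ℝ)
  have hpos : ∀ x, 0 < deriv f x := fun x => by
    rw [(hder x).deriv]
    have := hA2 ((x-1/2)/m)
    positivity
  have hana : ∀ x, AnalyticAt ℝ f x := fun x => by
    have h1 : AnalyticAt ℝ (fun x : ℝ => (x - 1/2)/m) x :=
      (analyticAt_id.sub analyticAt_const).div_const
    exact analyticAt_const.mul (((hA1 _).comp h1).sub analyticAt_const)
  have hmono : StrictMono f := strictMono_of_deriv_pos hpos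
  have hcont : Continuous f := continuous_iff_continuousAt.2 fun x => (hana x).continuousAt
  have hlin : Filter.Tendsto (fun x : ℝ => (x - 1/2)/m) Filter.atTop Filter.atTop :=
    (Filter.tendsto_atTop_add_const_right _ (-(1/2)) Filter.tendsto_id).atTop_div_const hm0
  have hlin2 : Filter.Tendsto (fun x : ℝ => (x - 1/2)/m) Filter.atBot Filter.atBot :=
    (Filter.tendsto_atBot_add_const_right _ (-(1/2)) Filter.tendsto_id).atBot_div_const hm0
  have hAt : Filter.Tendsto (fun x => A x - 1/2) Filter.atTop Filter.atTop :=
    Filter.tendsto_atTop_mono (fun x => by have := abs_le.1 (hA4 x); simp only [id]; linarith)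
      (Filter.tendsto_atTop_add_const_right _ (-1) Filter.tendsto_id)
  have hAb : Filter.Tendsto (fun x => A x - 1/2) Filter.atBot Filter.atBot :=
    Filter.tendsto_atBot_mono (fun x => by have := abs_le.1 (hA4 x); simp only [id]; linarith)
      Filter.tendsto_id
  have hsurj : Function.Surjective f := hcont.surjective
    ((hAt.comp hlin).const_mul_atTop hn0) ((hAb.comp hlin2).const_mul_atBot hn0)
  have hAz : ∀ (j : ℤ) (x : ℝ), A (x + j) = A x + j := by
    intro j
    induction j using Int.induction_on with
    | zero => simp
    | succ i ih => intro x; push_cast at ih ⊢; rw [← add_assoc, hA3, ih]; ring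
    | pred i ih =>
      intro x; push_cast at ih ⊢
      have := hA3 (x + (-(i:ℝ) - 1))
      rw [show x + (-(i:ℝ) - 1) + 1 = x + -i by ring, ih] at this
      linarith
  refine ⟨Equiv.ofBijective f ⟨hmono.injective, hsurj⟩, ⟨hana, hpos⟩, fun x => ?_, fun x hx => ?_⟩
  · change (n:ℝ) * (A ((x + m - 1/2)/m) - 1/2) = n * (A ((x - 1/2)/m) - 1/2) + n
    rw [show (x + m - 1/2)/(m:ℝ) = (x-1/2)/m + 1 by field_simp; ring, hA3]; ring
  · simp only [UU, Set.mem_ofPred_eq, not_exists, not_lt, oo, cc, Bool.not_false, Bool.not_true,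
      if_true, Bool.false_eq_true, if_false] at hx ⊢
    set y := (x-1/2)/m with hy
    have hxy : x = m * y + 1/2 := by rw [hy]; field_simp; ring
    have f1 := Int.floor_le y
    have f2 := Int.lt_floor_add_one y
    have h1 := hx ⌊y⌋
    have h2 := hx (⌊y⌋ + 1)
    push_cast at h1 h2
    rw [show x - 1/2 - m * (⌊y⌋:ℝ) = m * (y - ⌊y⌋) by rw [hxy]; ring,
      abs_of_nonneg (mul_nonneg hm0.le (by linarith))] at h1
    rw [show x - 1/2 - m * ((⌊y⌋:ℝ) + 1) = -(m * (1 - (y - ⌊y⌋))) by rw [hxy]; ring, abs_neg,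
      abs_of_nonneg (mul_nonneg hm0.le (by linarith))] at h2
    have h3 := hA5 (y - ⌊y⌋) (by rw [div_le_iff₀ (by positivity)]; linarith)
      (by rw [le_sub_comm, div_le_iff₀ (by positivity)]; linarith)
    have h4 := hAz ⌊y⌋ (y - ⌊y⌋)
    rw [sub_add_cancel] at h4
    refine ⟨⌊y⌋, ?_⟩
    change |(n:ℝ) * (A ((x - 1/2)/m) - 1/2) - 0 - (((n:ℤ) * ⌊y⌋ : ℤ) : ℝ)| < 1/8
    rw [← hy, h4]
    push_cast
    rw [show (n:ℝ) * (A (y - ⌊y⌋) + ⌊y⌋ - 1/2) - 0 - n * ⌊y⌋ = n * (A (y - ⌊y⌋) - 1/2) by ring,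
      abs_mul, abs_of_pos hn0]
    calc (n:ℝ) * |A (y - ⌊y⌋) - 1/2| < n * (1/(8*n)) := mul_lt_mul_of_pos_left h3 hn0
      _ = 1/8 := by field_simp

end helpers

/-- **Baumslag–Solitar groups of real-analytic diffeomorphisms of `ℝ`.** For any
integers `n > m ≥ 1`, there is an injective group homomorphism from
`BS(m,n) = ⟨a, b | a bᵐ a⁻¹ = bⁿ⟩` into the group of bijections of `ℝ`, all of whose
values are orientation-preserving real-analytic diffeomorphisms of `ℝ` (real-analytic
with everywhere positive derivative). -/
theorem bs_subgroup_of_analytic_diffeos (m n : ℕ) (hm : 1 ≤ m) (hmn : m < n) :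
    ∃ φ : PresentedGroup (BSRels m n) →* Equiv.Perm ℝ,
      Function.Injective φ ∧
      ∀ w, (∀ x : ℝ, AnalyticAt ℝ (φ w) x) ∧ (∀ x : ℝ, 0 < deriv (φ w) x) := by
  obtain ⟨f, hf, hfp, hfU⟩ := exists_a m n hm (by omega)
  let t : Equiv.Perm ℝ := Equiv.addRight 1
  have htz : ∀ (k : ℤ) (x : ℝ), (t ^ k) x = x + k := by
    intro k x
    simp [t]
  have htm : t ∈ anaDiff := by
    refine ⟨fun x => ?_, fun x => ?_⟩
    · exact analyticAt_id.add analyticAt_const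
    · have : deriv (fun y : ℝ => y + 1) x = 1 := by simp
      change 0 < deriv (fun y : ℝ => y + 1) x
      rw [this]; norm_num
  have hrel : f * t ^ m * f⁻¹ = t ^ n := by
    rw [mul_inv_eq_iff_eq_mul]
    ext x
    have h1 := htz m x
    have h2 := htz n (f x)
    rw [zpow_natCast] at h1 h2
    rw [Equiv.Perm.mul_apply, Equiv.Perm.mul_apply, h1, h2]
    push_cast
    exact hfp x
  let gen : Fin 2 → anaDiff := ![⟨f, hf⟩, ⟨t, htm⟩]
  have hg : ∀ r ∈ BSRels m n, FreeGroup.lift gen r = 1 := by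
    intro r hr
    rw [Set.mem_singleton_iff] at hr
    subst hr
    simp only [map_mul, map_inv, map_pow, FreeGroup.lift_apply_of]
    apply Subtype.ext
    simp [gen, hrel]
  let φ : PresentedGroup (BSRels m n) →* Equiv.Perm ℝ :=
    anaDiff.subtype.comp (PresentedGroup.toGroup hg)
  let a : PresentedGroup (BSRels m n) := PresentedGroup.of 0
  let b : PresentedGroup (BSRels m n) := PresentedGroup.of 1
  have hφa : φ a = f := by simp [φ, a, gen]
  have hφb : φ b = t := by simp [φ, b, gen]
  have hab : a * b ^ m * a⁻¹ = b ^ n := by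
    rw [← mul_inv_eq_one]
    exact PresentedGroup.one_of_mem (rels := BSRels m n) (Set.mem_singleton _)
  have hb : ∀ (k : ℤ) (x : ℝ), φ (b ^ k) x = x + k := fun k x => by
    rw [map_zpow, hφb, htz]
  have ha : ∀ (e : Bool) (x : ℝ), x ∉ UU m n (!e) → φ (tt a e) x ∈ UU m n e := by
    intro e x hx
    cases e
    · by_contra h
      apply hx
      have := hfU _ h
      simpa [tt, hφa] using this
    · simpa [tt, hφa] using hfU x hx
  have hall : ∀ g, HasForm m n a b g := by
    intro g
    induction g using PresentedGroup.induction_on with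
    | _ z =>
    have : ∀ x, HasForm m n a b x → HasForm m n a b (PresentedGroup.mk _ z * x) := by
      induction z using FreeGroup.induction_on with
      | C1 => intro x hx; simpa using hx
      | of i =>
        intro x hx
        fin_cases i
        · exact hx.tmul hab true
        · have := hx.bpow 1
          rw [zpow_one] at this
          exact this
      | inv_of i _ =>
        intro x hx
        rw [map_inv]
        fin_cases i
        · exact hx.tmul hab false
        · have := hx.bpow (-1)
          rw [zpow_neg_one] at this
          exact this
      | mul y z hy hz => intro x hx; rw [map_mul, mul_assoc]; exact hy _ (hz _ hx)
    simpa using this 1 (Or.inl ⟨0, by simp⟩)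
  refine ⟨φ, ?_, fun w => (PresentedGroup.toGroup hg w).2⟩
  rw [injective_iff_map_eq_one]
  intro g hg1
  rcases hall g with ⟨k, rfl⟩ | ⟨k, e, h, hr, rfl⟩
  · have h1 := hb k 0
    rw [hg1] at h1
    have h2 : (k:ℝ) = 0 := by simpa using h1.symm
    have h3 : k = 0 := by exact_mod_cast h2
    rw [h3, zpow_zero]
  · exfalso
    have h1 := red_mem φ hb ha hr
    refine quarter_notMem m n e k _ h1 ?_
    rw [← hb, ← Equiv.Perm.mul_apply, ← map_mul, hg1]; rfl
end

section
/- Suppose g and h are orientation-preserving homeomorphisms of the circle S¹ = ℝ/ℤ satisfying g ∘ hᵐ ∘ g⁻¹ = hⁿ, where m and n are positive integers with m ≠ n. Then h has a periodic point whose period divides |n − m|; in particular, the rotation number of h is rational of the form p/(m−n) mod 1 for some integer p. -/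
/-- **Periodic points from the Baumslag–Solitar relation on the circle.** Suppose `g`
and `h` are orientation-preserving homeomorphisms of `S¹ = ℝ/ℤ` (given by lifts `G`,
`H` which are increasing homeomorphisms of `ℝ` commuting with `x ↦ x + 1`) satisfying
`g ∘ hᵐ ∘ g⁻¹ = hⁿ` with `m, n` positive and `m ≠ n`.  Then `h` has a periodic point
whose period divides `|n − m|` (equivalently, `h^|n−m|` has a fixed point), and the
translation number of the lift `H` equals `p / (m − n)` for some integer `p` (so the
rotation number of `h` is `p/(m−n)` mod 1). -/
theorem bs_relation_on_circle_periodic_point (m n : ℕ) (hm : 0 < m) (hn : 0 < n)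
    (hmn : m ≠ n)
    (g h : Equiv.Perm (AddCircle (1 : ℝ))) (G H : ℝ → ℝ)
    (hGm : Monotone G) (hHm : Monotone H)
    (hGsm : StrictMono G) (hHsm : StrictMono H)
    (hGs : Function.Surjective G) (hHs : Function.Surjective H)
    (hGT : ∀ x, G (x + 1) = G x + 1) (hHT : ∀ x, H (x + 1) = H x + 1)
    (hgG : ∀ x : ℝ, g ↑x = ↑(G x)) (hhH : ∀ x : ℝ, h ↑x = ↑(H x))
    (hrel : g * h ^ m * g⁻¹ = h ^ n) :
    (∃ p : AddCircle (1 : ℝ), (h ^ ((n : ℤ) - (m : ℤ)).natAbs) p = p) ∧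
    ∃ p : ℤ, (⟨⟨H, hHm⟩, hHT⟩ : CircleDeg1Lift).translationNumber =
      (p : ℝ) / ((m : ℝ) - (n : ℝ)) := by
  set F : CircleDeg1Lift := ⟨⟨H, hHm⟩, hHT⟩ with hF
  set K : CircleDeg1Lift := ⟨⟨G, hGm⟩, hGT⟩ with hK
  have hFc : Continuous F := F.continuous_iff_surjective.2 hHs
  have hKc : Continuous K := K.continuous_iff_surjective.2 hGs
  have hpow : ∀ (k : ℕ) (x : ℝ), (h ^ k) (x : AddCircle (1 : ℝ)) = ((F ^ k) x : ℝ) := by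
    intro k
    induction k with
    | zero => intro x; simp
    | succ k ih =>
      intro x
      rw [pow_succ, Equiv.Perm.mul_apply, hhH, ih, pow_succ, CircleDeg1Lift.mul_apply]
      rfl
  have hrel' : g * h ^ m = h ^ n * g := by
    rw [← hrel]; group
  have hint : ∀ x : ℝ, ∃ k : ℤ, (k : ℝ) = K ((F ^ m) x) - (F ^ n) (K x) := by
    intro x
    have h1 : (g * h ^ m) (x : AddCircle (1 : ℝ)) = (h ^ n * g) (x : AddCircle (1 : ℝ)) := by
      rw [hrel']
    rw [Equiv.Perm.mul_apply, Equiv.Perm.mul_apply, hpow, hgG, hgG, hpow] at h1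
    have h2 := (sub_eq_zero.2 h1)
    have h3 : ((K ((F ^ m) x) - (F ^ n) (K x) : ℝ) : AddCircle (1 : ℝ)) = 0 := h2
    obtain ⟨z, hz⟩ := (AddCircle.coe_eq_zero_iff (1 : ℝ)).1 h3
    exact ⟨z, by rw [← hz]; simp⟩
  choose k hk using hint
  have hkc : Continuous k := by
    rw [Int.isClosedEmbedding_coe_real.isInducing.continuous_iff]
    have : ((fun z : ℤ => (z : ℝ)) ∘ k) = fun x => K ((F ^ m) x) - (F ^ n) (K x) := by
      funext x; exact hk x
    rw [this]
    exact (hKc.comp (F.continuous_pow hFc m)).sub ((F.continuous_pow hFc n).comp hKc)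
  have hconst : ∀ x, k x = k 0 := fun x => PreconnectedSpace.constant inferInstance hkc
  set T : CircleDeg1Liftˣ := CircleDeg1Lift.translate (Multiplicative.ofAdd ((k 0 : ℤ) : ℝ)) with hT
  have hsemi : Function.Semiconj K (F ^ m : CircleDeg1Lift) ((T : CircleDeg1Lift) * F ^ n : CircleDeg1Lift) := by
    intro x
    have h1 := hk x
    rw [hconst] at h1
    rw [CircleDeg1Lift.mul_apply, hT, CircleDeg1Lift.translate_apply]
    linarith
  have hcomm : Commute (T : CircleDeg1Lift) (F ^ n) := by
    rw [CircleDeg1Lift.commute_iff_commute]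
    intro x
    rw [hT, CircleDeg1Lift.translate_apply, CircleDeg1Lift.translate_apply,
      CircleDeg1Lift.map_int_add]
  have htau := CircleDeg1Lift.translationNumber_eq_of_semiconj hsemi
  rw [CircleDeg1Lift.translationNumber_mul_of_commute hcomm, CircleDeg1Lift.translationNumber_pow,
    CircleDeg1Lift.translationNumber_pow, hT, CircleDeg1Lift.translationNumber_translate] at htau
  have hne : (m : ℝ) - n ≠ 0 := sub_ne_zero.2 (by exact_mod_cast hmn)
  refine ⟨?_, k 0, by rw [eq_div_iff hne]; linarith⟩
  set d := ((n : ℤ) - (m : ℤ)).natAbs with hd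
  have hfix : ∃ p : ℤ, CircleDeg1Lift.translationNumber (F ^ d) = p := by
    rw [CircleDeg1Lift.translationNumber_pow]
    rcases le_total m n with hle | hle
    · refine ⟨-k 0, ?_⟩
      have : (d : ℤ) = n - m := by omega
      have : (d : ℝ) = n - m := by exact_mod_cast this
      rw [this]; push_cast; linarith
    · refine ⟨k 0, ?_⟩
      have : (d : ℤ) = m - n := by omega
      have : (d : ℝ) = m - n := by exact_mod_cast this
      rw [this]; linarith
  obtain ⟨p, hp⟩ := hfix
  obtain ⟨x, hx⟩ := ((F ^ d).translationNumber_eq_int_iff (F.continuous_pow hFc d)).1 hp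
  refine ⟨(x : AddCircle (1 : ℝ)), ?_⟩
  rw [hpow, hx]
  have h4 : ((p : ℝ) : AddCircle (1 : ℝ)) = 0 :=
    (AddCircle.coe_eq_zero_iff (1 : ℝ)).2 ⟨p, by simp⟩
  rw [AddCircle.coe_add, h4, add_zero]
end
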